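/- arXiv:math/0509548 — 8 statements merged into one kernel-verified Lean document; each statement's English description precedes it below -/
import Mathlib

section
/- For any words u, v, w over the index semigroup Ω, the coefficient of y_u ⊗ y_v in Δ_*(y_w) is nonzero if and only if w belongs to the contracting shuffle set csh(u,v), i.e., w can be obtained from an interleaving of u and v (preserving the internal order of each) by replacing, for some chosen set of pairs of adjacent letters with one letter coming from u and the other from v, each such pair by the sum of its two letters in Ω. -/
namespace Moulds

variable {X : Type*} {K : Type*}

/-- The multiset of shuffles (interleavings) of two words, counted with multiplicity. -/
def shuffles : List X → List X → Multiset (List X)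
  | [], v => {v}
  | a :: u, [] => {a :: u}
  | a :: u, b :: v =>
      (shuffles u (b :: v)).map (a :: ·) + (shuffles (a :: u) v).map (b :: ·)
termination_by u v => u.length + v.length

/-- The multiset of contracting shuffles of two words: interleavings in which any
pair of adjacent letters coming one from each word may be contracted to their sum. -/
def cshuffles [Add X] : List X → List X → Multiset (List X)
  | [], v => {v}
  | a :: u, [] => {a :: u}
  | a :: u, b :: v =>
      (cshuffles u (b :: v)).map (a :: ·) + (cshuffles (a :: u) v).map (b :: ·)
        + (cshuffles u v).map ((a + b) :: ·)
termination_by u v => u.length + v.length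

/-- Shuffle sum Σ_{w ∈ sh(u,v)} M^w (with multiplicity). -/
def shuffleSum [AddCommMonoid K] (M : List X → K) (u v : List X) : K :=
  ((shuffles u v).map M).sum

/-- Contracting shuffle sum Σ_{w ∈ csh(u,v)} M^w (with multiplicity). -/
def cshuffleSum [Add X] [AddCommMonoid K] (M : List X → K) (u v : List X) : K :=
  ((cshuffles u v).map M).sum

/-- A mould is alternal if it vanishes on ∅ and all its nontrivial shuffle sums vanish. -/
def Alternal [AddCommMonoid K] (M : List X → K) : Prop :=
  M [] = 0 ∧ ∀ u v : List X, u ≠ [] → v ≠ [] → shuffleSum M u v = 0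

/-- A mould is symétral if M^∅ = 1 and shuffle sums multiply. -/
def Symetral [CommRing K] (M : List X → K) : Prop :=
  M [] = 1 ∧ ∀ u v : List X, shuffleSum M u v = M u * M v

/-- A mould is alternel if it vanishes on ∅ and all its nontrivial contracting
shuffle sums vanish. -/
def Alternel [Add X] [AddCommMonoid K] (M : List X → K) : Prop :=
  M [] = 0 ∧ ∀ u v : List X, u ≠ [] → v ≠ [] → cshuffleSum M u v = 0

/-- A mould is symétrel if M^∅ = 1 and contracting shuffle sums multiply. -/
def Symetrel [Add X] [CommRing K] (M : List X → K) : Prop :=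
  M [] = 1 ∧ ∀ u v : List X, cshuffleSum M u v = M u * M v

/-- Mould multiplication: (M × N)^w = Σ_{w = w¹w²} M^{w¹} N^{w²}. -/
def mmul [CommRing K] (M N : List X → K) : List X → K :=
  fun w => ∑ i ∈ Finset.range (w.length + 1), M (w.take i) * N (w.drop i)

/-- The unit mould 1^•, equal to 1 on the empty word and 0 elsewhere. -/
def mone [One K] [Zero K] : List X → K :=
  fun w => match w with | [] => 1 | _ => 0

/-- The mould I^•, equal to 1 on one-letter words and 0 elsewhere. -/
def mId [One K] [Zero K] : List X → K :=
  fun w => if w.length = 1 then 1 else 0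

/-- All factorizations of a word into nonempty consecutive blocks; a block is
recorded as (first letter, rest of the block). -/
def splits : List X → List (List (X × List X))
  | [] => [[]]
  | a :: t =>
      (splits t).flatMap fun p =>
        match p with
        | [] => [[(a, ([] : List X))]]
        | (b, r) :: ps => [(a, b :: r) :: ps, (a, ([] : List X)) :: (b, r) :: ps]

/-- The sum ‖·‖ of the letters of a (nonempty) block. -/
def blockSum [Add X] (b : X × List X) : X := b.2.foldl (· + ·) b.1

/-- Mould composition:
(M ∘ N)^w = Σ_{w = w¹⋯wˢ, wⁱ ≠ ∅} M^{(‖w¹‖,…,‖wˢ‖)} N^{w¹} ⋯ N^{wˢ}. -/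
def mcomp [Add X] [CommRing K] (M N : List X → K) : List X → K :=
  fun w => ((splits w).map
    (fun p => M (p.map blockSum) * (p.map (fun b => N (b.1 :: b.2))).prod)).sum

/-- The monomial series associated to a word. -/
def mono [DecidableEq X] [One K] [Zero K] (w : List X) : List X → K :=
  fun w' => if w' = w then 1 else 0

end Moulds

namespace Moulds

/- STATEMENT 1: For the coproduct Δ_* on K⟨⟨Y⟩⟩ (Y indexed by a commutative semigroup Ω
in which every element has finitely many decompositions), characterized as a
multiplicative unital map sending each letter y_ω to
y_ω⊗1 + 1⊗y_ω + Σ_{α+β=ω} y_α⊗y_β, the coefficient of y_u ⊗ y_v in Δ_*(y_w) is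
nonzero iff w belongs to the contracting shuffle set csh(u,v). -/

variable {Ω : Type*} {K : Type*}

/-- Cauchy product on K⟨⟨Y⟩⟩, viewed on coefficients. -/
def sprod [CommRing K] (P Q : List Ω → K) : List Ω → K :=
  fun w => ∑ i ∈ Finset.range (w.length + 1), P (w.take i) * Q (w.drop i)

/-- Product on the (completed) tensor square of K⟨⟨Y⟩⟩, viewed on coefficients. -/
def tprod [CommRing K] (P Q : List Ω × List Ω → K) : List Ω × List Ω → K :=
  fun p => ∑ i ∈ Finset.range (p.1.length + 1), ∑ j ∈ Finset.range (p.2.length + 1),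
    P (p.1.take i, p.2.take j) * Q (p.1.drop i, p.2.drop j)

/-- The unit 1⊗1 of the tensor square. -/
def tone [CommRing K] : List Ω × List Ω → K := fun p => mone p.1 * mone p.2

def letterCop [Add Ω] [DecidableEq Ω] [CommRing K] (ω : Ω) : List Ω × List Ω → K :=
  fun p => mono [ω] p.1 * mone p.2 + mone p.1 * mono [ω] p.2 +
        if List.zipWith (· + ·) p.1 p.2 = [ω] ∧ p.1.length = 1 ∧ p.2.length = 1 then 1 else 0

theorem letterCop_big_left [Add Ω] [DecidableEq Ω] [CommRing K] (ω : Ω) (x y : List Ω)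
    (hx : 2 ≤ x.length) : letterCop (K := K) ω (x, y) = 0 := by
  have h1 : x.length ≠ 1 := by omega
  have h2 : x ≠ [ω] := by rintro rfl; simp at h1
  have h3 : (mone x : K) = 0 := by cases x <;> simp_all [mone]
  simp [letterCop, mono, h1, h2, h3]

theorem letterCop_big_right [Add Ω] [DecidableEq Ω] [CommRing K] (ω : Ω) (x y : List Ω)
    (hx : 2 ≤ y.length) : letterCop (K := K) ω (x, y) = 0 := by
  have h1 : y.length ≠ 1 := by omega
  have h2 : y ≠ [ω] := by rintro rfl; simp at h1
  have h3 : (mone y : K) = 0 := by cases y <;> simp_all [mone]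
  simp [letterCop, mono, h1, h2, h3]

theorem sum_two [CommRing K] (n : ℕ) (f : ℕ → K) (h : ∀ i, 2 ≤ i → i ≤ n + 1 → f i = 0) :
    ∑ i ∈ Finset.range (n + 1 + 1), f i = f 0 + f 1 := by
  rw [Finset.sum_range_succ', Finset.sum_range_succ', Finset.sum_eq_zero]
  · simp [add_comm]
  · intro i hi
    have := Finset.mem_range.1 hi
    exact h _ (by omega) (by omega)

theorem tprod_nil_nil [Add Ω] [DecidableEq Ω] [CommRing K] (ω : Ω) (Q : List Ω × List Ω → K) :
    tprod (letterCop ω) Q ([], []) = 0 := by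
  simp [tprod, letterCop, mono, mone]

theorem tprod_cons_nil [Add Ω] [DecidableEq Ω] [CommRing K] (ω c : Ω) (u : List Ω)
    (Q : List Ω × List Ω → K) :
    tprod (letterCop ω) Q (c :: u, []) = if c = ω then Q (u, []) else 0 := by
  simp only [tprod, List.length_cons]
  rw [sum_two]
  · simp [letterCop, mono, mone]
  · intro i h1 h2
    refine Finset.sum_eq_zero fun j _ => ?_
    rw [letterCop_big_left, zero_mul]
    simp; omega

theorem tprod_nil_cons [Add Ω] [DecidableEq Ω] [CommRing K] (ω c : Ω) (u : List Ω)
    (Q : List Ω × List Ω → K) :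
    tprod (letterCop ω) Q ([], c :: u) = if c = ω then Q ([], u) else 0 := by
  simp only [tprod, List.length_cons, List.length_nil, Finset.sum_range_succ _ 0,
    Finset.sum_range_zero, zero_add]
  rw [sum_two]
  · simp [letterCop, mono, mone]
  · intro i h1 h2
    rw [letterCop_big_right, zero_mul]
    simp; omega

theorem tprod_cons_cons [Add Ω] [DecidableEq Ω] [CommRing K] (ω c d : Ω) (u v : List Ω)
    (Q : List Ω × List Ω → K) :
    tprod (letterCop ω) Q (c :: u, d :: v) = (if c = ω then Q (u, d :: v) else 0)
      + (if d = ω then Q (c :: u, v) else 0) + (if c + d = ω then Q (u, v) else 0) := by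
  have h2 : ∀ i, ∑ j ∈ Finset.range (v.length + 1 + 1),
      letterCop ω ((c :: u).take i, (d :: v).take j) * Q ((c :: u).drop i, (d :: v).drop j)
      = letterCop ω ((c :: u).take i, (d :: v).take 0) * Q ((c :: u).drop i, (d :: v).drop 0)
      + letterCop ω ((c :: u).take i, (d :: v).take 1) * Q ((c :: u).drop i, (d :: v).drop 1) := by
    intro i
    rw [sum_two]
    intro j h1 h2
    rw [letterCop_big_right, zero_mul]
    simp; omega
  simp only [tprod, List.length_cons, h2]
  rw [sum_two]
  · simp [letterCop, mono, mone]
    ring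
  · intro i h1 h2
    rw [letterCop_big_left, letterCop_big_left, zero_mul, zero_mul, add_zero] <;>
    · simp; omega

theorem mono_cons [DecidableEq Ω] [CommRing K] (a : Ω) (w : List Ω) :
    (mono (a :: w) : List Ω → K) = sprod (mono [a]) (mono w) := by
  funext x
  cases x with
  | nil => simp [sprod, mono]
  | cons b x =>
    simp only [sprod, List.length_cons]
    rw [sum_two]
    · by_cases h1 : b = a <;> by_cases h2 : x = w <;> simp [mono, h1, h2]
    · intro i h1 h2
      have : (b :: x).take i ≠ [a] := by
        intro h
        have := congrArg List.length h
        simp at this; omega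
      simp [mono, this]

theorem count_cons_map [DecidableEq Ω] (a c : Ω) (w : List Ω) (s : Multiset (List Ω)) :
    (s.map (c :: ·)).count (a :: w) = if c = a then s.count w else 0 := by
  split_ifs with h
  · subst h
    exact Multiset.count_map_eq_count' _ _ (List.cons_injective) _
  · rw [Multiset.count_eq_zero]
    simp [h]

theorem count_nil_map [DecidableEq Ω] (c : Ω) (s : Multiset (List Ω)) :
    (s.map (c :: ·)).count [] = 0 := by
  rw [Multiset.count_eq_zero]
  simp

theorem coeff_eq_count [Add Ω] [DecidableEq Ω] [CommRing K]
    (Δ : (List Ω → K) → (List Ω × List Ω → K))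
    (hmul : ∀ P Q : List Ω → K, Δ (sprod P Q) = tprod (Δ P) (Δ Q))
    (hone : Δ mone = tone)
    (hletter : ∀ ω : Ω, Δ (mono [ω]) = letterCop ω) (w : List Ω) :
    ∀ u v : List Ω, Δ (mono w) (u, v) = ((cshuffles u v).count w : K) := by
  induction w with
  | nil =>
    intro u v
    have h : (mono [] : List Ω → K) = mone := by
      funext x; cases x <;> simp [mono, mone]
    rw [h, hone]
    cases u <;> cases v <;>
      simp [tone, mone, cshuffles, count_nil_map, Multiset.count_singleton]
  | cons a w ih =>
    intro u v
    rw [mono_cons, hmul, hletter]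
    cases u with
    | nil =>
      cases v with
      | nil => simp [tprod_nil_nil, cshuffles, Multiset.count_singleton]
      | cons d v =>
        rw [tprod_nil_cons, ih]
        rcases eq_or_ne a d with h | h
        · simp [cshuffles, Multiset.count_singleton, h]
        · simp [cshuffles, Multiset.count_singleton, h, h.symm]
    | cons c u =>
      cases v with
      | nil =>
        rw [tprod_cons_nil, ih]
        have : cshuffles u ([] : List Ω) = {u} := by cases u <;> simp [cshuffles]
        rw [this]
        rcases eq_or_ne a c with h | h
        · simp [cshuffles, Multiset.count_singleton, h]
        · simp [cshuffles, Multiset.count_singleton, h, h.symm]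
      | cons d v =>
        rw [tprod_cons_cons, ih, ih, ih, cshuffles]
        simp [count_cons_map]

theorem coeff_of_coproductStar_ne_zero_iff_mem_contracting_shuffles
    [AddCommSemigroup Ω] [DecidableEq Ω] [Field K] [CharZero K]
    (hfin : ∀ ω : Ω, {p : Ω × Ω | p.1 + p.2 = ω}.Finite)
    (Δ : (List Ω → K) → (List Ω × List Ω → K))
    (hmul : ∀ P Q : List Ω → K, Δ (sprod P Q) = tprod (Δ P) (Δ Q))
    (hone : Δ mone = tone)
    (hletter : ∀ ω : Ω, Δ (mono [ω]) =
      fun p => mono [ω] p.1 * mone p.2 + mone p.1 * mono [ω] p.2 +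
        (match p with
          | ([α], [β]) => if α + β = ω then (1 : K) else 0
          | _ => 0))
    (u v w : List Ω) :
    Δ (mono w) (u, v) ≠ 0 ↔ w ∈ cshuffles u v := by
  have hletter' : ∀ ω : Ω, Δ (mono [ω]) = letterCop ω := by
    intro ω
    rw [hletter]
    funext p
    rcases p with ⟨x, y⟩
    rcases x with _ | ⟨a, _ | ⟨b, x⟩⟩ <;> rcases y with _ | ⟨c, _ | ⟨d, y⟩⟩ <;>
      simp [letterCop]
  rw [coeff_eq_count Δ hmul hone hletter', Nat.cast_ne_zero, Multiset.count_ne_zero]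

end Moulds
end

section
/- Let Ω be a commutative semigroup and K a ℚ-algebra. The mould J defined by J^∅ = 0 and J^w = (−1)^{r+1}/r for every word w of length r ≥ 1 is alternel: Σ_{w∈csh(u,v)} J^w = 0 for all nonempty words u, v. -/
namespace Moulds

/- STATEMENT 7: Over a commutative semigroup Ω and a ℚ-algebra K, the mould J with
J^∅ = 0 and J^w = (−1)^{r+1}/r on words of length r ≥ 1 is alternel. -/

variable {Ω : Type*} [AddCommSemigroup Ω] {K : Type*} [CommRing K] [Algebra ℚ K]

/-- The elementary mould J: J^∅ = 0 and J^w = (−1)^{r+1}/r for words of length r ≥ 1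
(in ℚ, division by zero is zero, so the formula also gives J^∅ = 0). -/
def Jmould (Ω : Type*) (K : Type*) [CommRing K] [Algebra ℚ K] : List Ω → K :=
  fun w => algebraMap ℚ K ((-1) ^ (w.length + 1) / w.length)

/-- The number of ways identity: binomial coefficients form a symétrel mould. -/
theorem cshuffles_choose {X : Type*} [Add X] (k : ℕ) : ∀ u v : List X,
    ((cshuffles u v).map (fun w => k.choose w.length)).sum
      = k.choose u.length * k.choose v.length := by
  induction k with
  | zero =>
    intro u v
    cases u with
    | nil => simp [cshuffles]
    | cons a u =>
      cases v with
      | nil => simp [cshuffles]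
      | cons b v => simp [cshuffles, Function.comp_def]
  | succ k ih =>
    intro u v
    cases u with
    | nil => simp [cshuffles]
    | cons a u =>
      cases v with
      | nil => simp [cshuffles]
      | cons b v =>
        have h1 := ih u (b :: v)
        have h2 := ih (a :: u) v
        have h3 := ih u v
        have h4 := ih (a :: u) (b :: v)
        simp only [cshuffles, Multiset.map_add, Multiset.map_map, Multiset.sum_add,
          Function.comp_def, List.length_cons, Nat.choose_succ_succ, Multiset.sum_map_add,
          Nat.succ_eq_add_one] at h1 h2 h3 h4 ⊢
        rw [h1, h2, h3]
        linarith

/-- The binomial coefficient polynomial. -/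
noncomputable def binPoly (r : ℕ) : Polynomial ℚ :=
  Polynomial.C ((r.factorial : ℚ)⁻¹) * descPochhammer ℚ r

theorem binPoly_eval (r k : ℕ) : (binPoly r).eval (k : ℚ) = (k.choose r : ℚ) := by
  have h : (r.factorial : ℚ) ≠ 0 := by exact_mod_cast r.factorial_ne_zero
  rw [binPoly, Polynomial.eval_mul, Polynomial.eval_C, descPochhammer_eval_eq_descFactorial,
    Nat.descFactorial_eq_factorial_mul_choose]
  push_cast
  field_simp

theorem descPochhammer_coeff_zero (r : ℕ) : (descPochhammer ℚ (r + 1)).coeff 0 = 0 := by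
  rw [descPochhammer_succ_left, Polynomial.coeff_X_mul_zero]

theorem descPochhammer_coeff_one (r : ℕ) :
    (descPochhammer ℚ (r + 1)).coeff 1 = (-1) ^ r * r.factorial := by
  induction r with
  | zero => simp
  | succ r ih =>
    rw [descPochhammer_succ_right, mul_sub, Polynomial.coeff_sub, Polynomial.coeff_mul_X,
      descPochhammer_coeff_zero, ← Polynomial.C_eq_natCast, Polynomial.coeff_mul_C, ih,
      Nat.factorial_succ]
    push_cast
    ring

theorem binPoly_coeff_zero {r : ℕ} (hr : r ≠ 0) : (binPoly r).coeff 0 = 0 := by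
  obtain ⟨n, rfl⟩ := Nat.exists_eq_succ_of_ne_zero hr
  rw [binPoly, Polynomial.coeff_C_mul, descPochhammer_coeff_zero, mul_zero]

theorem binPoly_coeff_one (r : ℕ) : (binPoly r).coeff 1 = (-1) ^ (r + 1) / r := by
  cases r with
  | zero => simp [binPoly, Polynomial.coeff_one]
  | succ n =>
    have h : (n.factorial : ℚ) ≠ 0 := by exact_mod_cast n.factorial_ne_zero
    have h' : (n : ℚ) + 1 ≠ 0 := by positivity
    rw [binPoly, Polynomial.coeff_C_mul, descPochhammer_coeff_one, Nat.factorial_succ]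
    push_cast
    field_simp
    ring

theorem cshuffles_binPoly {X : Type*} [Add X] (u v : List X) :
    ((cshuffles u v).map (fun w => binPoly w.length)).sum
      = binPoly u.length * binPoly v.length := by
  apply Polynomial.eq_of_infinite_eval_eq
  apply Set.Infinite.mono (s := Set.range (fun k : ℕ => (k : ℚ)))
  · rintro _ ⟨k, rfl⟩
    have h := congrArg (Nat.cast : ℕ → ℚ) (cshuffles_choose k u v)
    have e := map_multiset_sum (Polynomial.evalRingHom (k : ℚ))
      ((cshuffles u v).map (fun w => binPoly w.length))
    simp only [Multiset.map_map, Function.comp_def, Polynomial.coe_evalRingHom,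
      binPoly_eval] at e
    simp only [Set.mem_setOf_eq, Polynomial.eval_mul, binPoly_eval]
    rw [e]
    simpa [Nat.cast_multiset_sum, Multiset.map_map, Function.comp_def] using h
  · exact Set.infinite_range_of_injective Nat.cast_injective

theorem Jmould_alternel : Alternel (Jmould Ω K) := by
  refine ⟨by simp [Jmould], fun u v hu hv => ?_⟩
  have hu' : u.length ≠ 0 := by simpa using hu
  have hv' : v.length ≠ 0 := by simpa using hv
  have h := congrArg (fun p => algebraMap ℚ K (Polynomial.lcoeff ℚ 1 p)) (cshuffles_binPoly u v)
  simp only [map_multiset_sum, Multiset.map_map, Function.comp_def, Polynomial.lcoeff_apply,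
    binPoly_coeff_one, Polynomial.mul_coeff_one, binPoly_coeff_zero hu',
    binPoly_coeff_zero hv', zero_mul, mul_zero, add_zero, map_zero] at h
  exact h

end Moulds
end

section
/- Let K be a field and Ω ⊆ K an additive sub-semigroup of K with 0 ∉ Ω. The mould S defined by S^∅ = 1 and S^{(ω_1,…,ω_r)} = (−1)^r / (ω_1(ω_1+ω_2)⋯(ω_1+⋯+ω_r)) for r ≥ 1 (all partial sums ω_1+⋯+ω_i lie in Ω, hence are nonzero) is symétral: Σ_{w∈sh(u,v)} S^w = S^u · S^v for all words u, v. -/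
namespace Moulds

/- STATEMENT 8: Let K be a field and Ω ⊆ K an additive sub-semigroup with 0 ∉ Ω.
The mould S with S^∅ = 1 and
S^{(ω₁,…,ω_r)} = (−1)^r / (ω₁(ω₁+ω₂)⋯(ω₁+⋯+ω_r)) is symétral on words with
letters in Ω. -/

variable {K : Type*} [Field K]

/-- The mould S^{(ω₁,…,ω_r)} = (−1)^r / ∏_{i=1}^r (ω₁+⋯+ω_i); for r = 0 this
gives S^∅ = 1. -/
def Smould (K : Type*) [Field K] : List K → K :=
  fun w => (-1) ^ w.length /
    ((List.range w.length).map (fun i => (w.take (i + 1)).sum)).prod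

theorem shuffles_nil_left {X : Type*} (v : List X) : shuffles [] v = {v} := by
  rw [shuffles]

theorem shuffles_nil_right {X : Type*} (u : List X) : shuffles u [] = {u} := by
  cases u <;> rw [shuffles]

theorem shuffles_cons_cons {X : Type*} (a b : X) (u v : List X) :
    shuffles (a :: u) (b :: v) =
      (shuffles u (b :: v)).map (a :: ·) + (shuffles (a :: u) v).map (b :: ·) := by
  rw [shuffles]

theorem shuffles_snoc {X : Type*} (a b : X) : ∀ (u v : List X),
    shuffles (u ++ [a]) (v ++ [b]) =
      (shuffles u (v ++ [b])).map (· ++ [a]) + (shuffles (u ++ [a]) v).map (· ++ [b])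
  | [], [] => by
      simp [shuffles_nil_left, shuffles_nil_right, shuffles_cons_cons, add_comm]
  | [], d :: v => by
      have ih := shuffles_snoc a b [] v
      simp only [List.nil_append, List.cons_append, shuffles_nil_left,
        shuffles_cons_cons] at ih ⊢
      rw [ih]
      simp only [Multiset.map_add, Multiset.map_singleton, Multiset.map_map,
        Function.comp_def, List.cons_append]
      abel
  | c :: u, [] => by
      have ih := shuffles_snoc a b u []
      simp only [List.nil_append, List.cons_append, shuffles_nil_right,
        shuffles_cons_cons] at ih ⊢
      rw [ih]
      simp only [Multiset.map_add, Multiset.map_singleton, Multiset.map_map,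
        Function.comp_def, List.cons_append]
      abel
  | c :: u, d :: v => by
      have ih1 := shuffles_snoc a b u (d :: v)
      have ih2 := shuffles_snoc a b (c :: u) v
      simp only [List.cons_append, shuffles_cons_cons] at ih1 ih2 ⊢
      rw [ih1, ih2]
      simp only [Multiset.map_add, Multiset.map_map,
        Function.comp_def, List.cons_append]
      abel
termination_by u v => u.length + v.length

theorem sum_of_mem_shuffles {K : Type*} [Field K] : ∀ (u v w : List K), w ∈ shuffles u v →
    w.sum = u.sum + v.sum
  | [], v, w, h => by
      rw [shuffles_nil_left, Multiset.mem_singleton] at h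
      simp [h]
  | a :: u, [], w, h => by
      rw [shuffles_nil_right, Multiset.mem_singleton] at h
      simp [h]
  | a :: u, b :: v, w, h => by
      rw [shuffles_cons_cons, Multiset.mem_add, Multiset.mem_map, Multiset.mem_map] at h
      rcases h with ⟨x, hx, rfl⟩ | ⟨x, hx, rfl⟩
      · have := sum_of_mem_shuffles u (b :: v) x hx
        simp only [List.sum_cons] at this ⊢
        rw [this]; ring
      · have := sum_of_mem_shuffles (a :: u) v x hx
        simp only [List.sum_cons] at this ⊢
        rw [this]; ring
termination_by u v => u.length + v.length

theorem Smould_nil (K : Type*) [Field K] : Smould K [] = 1 := by simp [Smould]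

theorem Smould_snoc {K : Type*} [Field K] (w : List K) (a : K) :
    Smould K (w ++ [a]) = Smould K w * (-(w.sum + a)⁻¹) := by
  have h : (List.range w.length).map (fun i => ((w ++ [a]).take (i + 1)).sum)
      = (List.range w.length).map (fun i => (w.take (i + 1)).sum) := by
    apply List.map_congr_left
    intro i hi
    rw [List.mem_range] at hi
    rw [List.take_append_of_le_length (by omega)]
  unfold Smould
  rw [List.length_append, List.length_singleton, List.range_succ, List.map_append,
    List.prod_append, h]
  have h2 : (w ++ [a]).take (w.length + 1) = w ++ [a] :=
    List.take_of_length_le (by simp)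
  simp only [List.map_cons, List.map_nil, List.prod_singleton, h2, List.sum_append,
    List.sum_singleton, pow_succ, div_eq_mul_inv, mul_inv]
  ring

theorem sum_snoc_mem {K : Type*} [Field K] {Ω : Set K}
    (hadd : ∀ a ∈ Ω, ∀ b ∈ Ω, a + b ∈ Ω) (u : List K) (a : K)
    (h : ∀ x ∈ u, x ∈ Ω) (ha : a ∈ Ω) : u.sum + a ∈ Ω := by
  induction u with
  | nil => simpa using ha
  | cons c u ih =>
      rw [List.sum_cons, add_assoc]
      exact hadd _ (h c (by simp)) _ (ih fun x hx => h x (by simp [hx]))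

theorem shuffleSum_Smould_aux {K : Type*} [Field K] (u v : List K) (a : K) (s : K)
    (hs : u.sum + v.sum + a = s) :
    ((((shuffles u v).map (· ++ [a])).map (Smould K)).sum) =
      shuffleSum (Smould K) u v * (-s⁻¹) := by
  unfold shuffleSum
  rw [Multiset.map_map, ← Multiset.sum_map_mul_right]
  congr 1
  apply Multiset.map_congr rfl
  intro w hw
  rw [Function.comp_apply, Smould_snoc, sum_of_mem_shuffles u v w hw, hs]

theorem shuffleSum_Smould {K : Type*} [Field K] {Ω : Set K}
    (hadd : ∀ a ∈ Ω, ∀ b ∈ Ω, a + b ∈ Ω) (h0 : (0 : K) ∉ Ω) (n : ℕ) :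
    ∀ u v : List K, u.length + v.length = n → (∀ x ∈ u, x ∈ Ω) → (∀ x ∈ v, x ∈ Ω) →
        shuffleSum (Smould K) u v = Smould K u * Smould K v := by
  induction n using Nat.strong_induction_on with
  | _ n ih =>
  intro u v hn hu hv
  rcases List.eq_nil_or_concat' u with rfl | ⟨u, a, rfl⟩
  · simp [shuffleSum, shuffles_nil_left, Smould_nil]
  rcases List.eq_nil_or_concat' v with rfl | ⟨v, b, rfl⟩
  · simp [shuffleSum, shuffles_nil_right, Smould_nil]
  have hu' : ∀ x ∈ u, x ∈ Ω := fun x hx => hu x (by simp [hx])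
  have hv' : ∀ x ∈ v, x ∈ Ω := fun x hx => hv x (by simp [hx])
  have hU := sum_snoc_mem hadd u a hu' (hu a (by simp))
  have hV := sum_snoc_mem hadd v b hv' (hv b (by simp))
  have hUV := hadd _ hU _ hV
  have nU : u.sum + a ≠ 0 := fun h => h0 (h ▸ hU)
  have nV : v.sum + b ≠ 0 := fun h => h0 (h ▸ hV)
  have nUV : (u.sum + a) + (v.sum + b) ≠ 0 := fun h => h0 (h ▸ hUV)
  simp only [List.length_append, List.length_singleton] at hn
  have i1 := ih (u.length + (v ++ [b]).length) (by simp; omega) u (v ++ [b]) rfl hu' hv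
  have i2 := ih ((u ++ [a]).length + v.length) (by simp; omega) (u ++ [a]) v rfl hu hv'
  have e : shuffleSum (Smould K) (u ++ [a]) (v ++ [b]) =
      shuffleSum (Smould K) u (v ++ [b]) * (-((u.sum + a) + (v.sum + b))⁻¹) +
      shuffleSum (Smould K) (u ++ [a]) v * (-((u.sum + a) + (v.sum + b))⁻¹) := by
    rw [← shuffleSum_Smould_aux u (v ++ [b]) a _ (by simp; ring),
      ← shuffleSum_Smould_aux (u ++ [a]) v b _ (by simp; ring)]
    rw [shuffleSum, shuffles_snoc, Multiset.map_add, Multiset.sum_add]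
  rw [e, i1, i2, Smould_snoc, Smould_snoc]
  generalize u.sum + a = U at *
  generalize v.sum + b = V at *
  field_simp

theorem Smould_symetral (Ω : Set K)
    (hadd : ∀ a ∈ Ω, ∀ b ∈ Ω, a + b ∈ Ω) (h0 : (0 : K) ∉ Ω) :
    Smould K [] = 1 ∧
      ∀ u v : List K, (∀ x ∈ u, x ∈ Ω) → (∀ x ∈ v, x ∈ Ω) →
        shuffleSum (Smould K) u v = Smould K u * Smould K v := by
  exact ⟨Smould_nil K, fun u v hu hv => shuffleSum_Smould hadd h0 _ u v rfl hu hv⟩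

end Moulds
end

section
/- Let Ω ⊆ ℂ be an additive sub-semigroup such that e^{−ω} ≠ 1 for every ω ∈ Ω. The mould Se defined by Se^∅ = 1 and Se^{(ω_1,…,ω_r)} = e^{ω_1+⋯+ω_r} / ∏_{i=1}^{r} (e^{−(ω_1+⋯+ω_i)} − 1) for r ≥ 1 (all partial sums lie in Ω, so the denominators are nonzero) is symétrel: Σ_{w∈csh(u,v)} Se^w = Se^u · Se^v for all words u, v. -/
namespace Moulds

/- STATEMENT 9: Let Ω ⊆ ℂ be an additive sub-semigroup with e^{−ω} ≠ 1 for all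
ω ∈ Ω.  The mould Se with Se^∅ = 1 and
Se^{(ω₁,…,ω_r)} = e^{ω₁+⋯+ω_r} / ∏_{i=1}^r (e^{−(ω₁+⋯+ω_i)} − 1) is symétrel on
words with letters in Ω. -/

/-- The mould Se^{(ω₁,…,ω_r)} = e^{‖w‖} / ∏_{i=1}^r (e^{−(ω₁+⋯+ω_i)} − 1); for
r = 0 this gives Se^∅ = 1. -/
noncomputable def Semould : List ℂ → ℂ :=
  fun w => Complex.exp w.sum /
    ((List.range w.length).map
      (fun i => Complex.exp (-(w.take (i + 1)).sum) - 1)).prod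

theorem csh_nil_right {X : Type*} [Add X] (u : List X) : cshuffles u [] = {u} := by
  cases u <;> simp [cshuffles]

theorem csh_nil_left {X : Type*} [Add X] (u : List X) : cshuffles [] u = {u} := by
  simp [cshuffles]

theorem csh_cons {X : Type*} [Add X] (a b : X) (u v : List X) :
    cshuffles (a :: u) (b :: v) =
      (cshuffles u (b :: v)).map (a :: ·) + (cshuffles (a :: u) v).map (b :: ·)
        + (cshuffles u v).map ((a + b) :: ·) := by
  rw [cshuffles]

theorem csh_snoc {X : Type*} [Add X] (a b : X) : ∀ (n : ℕ) (u v : List X),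
    u.length + v.length ≤ n →
    cshuffles (u ++ [a]) (v ++ [b]) =
      (cshuffles u (v ++ [b])).map (· ++ [a]) + (cshuffles (u ++ [a]) v).map (· ++ [b])
        + (cshuffles u v).map (· ++ [a + b]) := by
  intro n
  induction n with
  | zero =>
    intro u v h
    have hu : u = [] := List.length_eq_zero_iff.mp (by omega)
    have hv : v = [] := List.length_eq_zero_iff.mp (by omega)
    subst hu hv
    simp [csh_cons, csh_nil_left, csh_nil_right, add_comm]
  | succ n ih =>
    intro u v h
    match u, v with
    | [], [] => simp [csh_cons, csh_nil_left, csh_nil_right, add_comm]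
    | [], d :: v =>
      have := ih [] v (by simp at h ⊢; omega)
      simp only [List.nil_append] at this
      simp only [List.nil_append, List.cons_append, csh_cons, csh_nil_left, this,
        Multiset.map_add, Multiset.map_map, Function.comp_def, Multiset.map_singleton]
      ac_rfl
    | c :: u, [] =>
      have := ih u [] (by simp at h ⊢; omega)
      simp only [List.nil_append] at this
      simp only [List.nil_append, List.cons_append, csh_cons, csh_nil_right, this,
        Multiset.map_add, Multiset.map_map, Function.comp_def, Multiset.map_singleton]
      ac_rfl
    | c :: u, d :: v =>
      have h1 := ih (c :: u) v (by simp at h ⊢; omega)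
      have h2 := ih u (d :: v) (by simp at h ⊢; omega)
      have h3 := ih u v (by simp at h ⊢; omega)
      simp only [List.cons_append] at h1 h2
      simp only [List.cons_append, csh_cons, h1, h2, h3,
        Multiset.map_add, Multiset.map_map, Function.comp_def]
      ac_rfl

theorem csh_sum : ∀ (n : ℕ) (u v : List ℂ), u.length + v.length ≤ n →
    ∀ w ∈ cshuffles u v, w.sum = u.sum + v.sum := by
  intro n
  induction n with
  | zero =>
    intro u v h
    have hu : u = [] := List.length_eq_zero_iff.mp (by omega)
    have hv : v = [] := List.length_eq_zero_iff.mp (by omega)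
    subst hu hv
    simp [csh_nil_left]
  | succ n ih =>
    intro u v h w hw
    match u, v with
    | [], v => simp [csh_nil_left] at hw; simp [hw]
    | c :: u, [] => simp [csh_nil_right] at hw; simp [hw]
    | c :: u, d :: v =>
      simp only [csh_cons, Multiset.mem_add, Multiset.mem_map] at hw
      rcases hw with (⟨x, hx, rfl⟩ | ⟨x, hx, rfl⟩) | ⟨x, hx, rfl⟩
      · have := ih _ _ (by simp at h ⊢; omega) x hx
        simp [this]; ring
      · have := ih _ _ (by simp at h ⊢; omega) x hx
        simp [this]; ring
      · have := ih _ _ (by simp at h ⊢; omega) x hx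
        simp [this]; ring

theorem Semould_snoc (w : List ℂ) (a : ℂ) :
    Semould (w ++ [a]) =
      Complex.exp a / (Complex.exp (-(w.sum + a)) - 1) * Semould w := by
  have h : (List.range w.length).map
      (fun i => Complex.exp (-((w ++ [a]).take (i + 1)).sum) - 1) =
      (List.range w.length).map (fun i => Complex.exp (-(w.take (i + 1)).sum) - 1) := by
    apply List.map_congr_left
    intro i hi
    rw [List.take_append_of_le_length (by simpa using hi)]
  have h2 : (w ++ [a]).take (w.length + 1) = w ++ [a] := List.take_of_length_le (by simp)
  unfold Semould
  rw [List.length_append, List.length_singleton, List.range_succ, List.map_append, h,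
    List.prod_append, List.map_singleton, h2, List.prod_singleton, List.sum_append,
    List.sum_singleton, Complex.exp_add]
  rw [div_mul_div_comm, mul_comm (Complex.exp a), mul_comm (Complex.exp _ - 1)]

theorem sum_snoc (u v : List ℂ) (a : ℂ) :
    ((cshuffles u v).map (fun w => Semould (w ++ [a]))).sum =
      Complex.exp a / (Complex.exp (-(u.sum + v.sum + a)) - 1) * cshuffleSum Semould u v := by
  unfold cshuffleSum
  rw [← Multiset.sum_map_mul_left]
  congr 1
  apply Multiset.map_congr rfl
  intro w hw
  rw [Semould_snoc, csh_sum _ u v le_rfl w hw]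

theorem sum_mem_snoc {Ω : Set ℂ} (hadd : ∀ a ∈ Ω, ∀ b ∈ Ω, a + b ∈ Ω) (u : List ℂ) :
    ∀ a ∈ Ω, (∀ x ∈ u, x ∈ Ω) → u.sum + a ∈ Ω := by
  induction u with
  | nil => intro a ha _; simpa using ha
  | cons c u ih =>
    intro a ha h
    rw [List.sum_cons, add_assoc]
    exact hadd _ (h c (by simp)) _ (ih a ha fun x hx => h x (by simp [hx]))

theorem Semould_nil : Semould [] = 1 := by simp [Semould]

theorem main_aux (Ω : Set ℂ)
    (hadd : ∀ a ∈ Ω, ∀ b ∈ Ω, a + b ∈ Ω)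
    (hω : ∀ ω ∈ Ω, Complex.exp (-ω) ≠ 1) : ∀ (n : ℕ) (u v : List ℂ),
      u.length + v.length ≤ n → (∀ x ∈ u, x ∈ Ω) → (∀ x ∈ v, x ∈ Ω) →
        cshuffleSum Semould u v = Semould u * Semould v := by
  intro n
  induction n with
  | zero =>
    intro u v h _ _
    have hu : u = [] := List.length_eq_zero_iff.mp (by omega)
    have hv : v = [] := List.length_eq_zero_iff.mp (by omega)
    subst hu hv
    simp [cshuffleSum, csh_nil_left, Semould_nil]
  | succ n ih =>
    intro u v h hu hv
    rcases List.eq_nil_or_concat' u with rfl | ⟨u, a, rfl⟩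
    · simp [cshuffleSum, csh_nil_left, Semould_nil]
    rcases List.eq_nil_or_concat' v with rfl | ⟨v, b, rfl⟩
    · simp [cshuffleSum, csh_nil_right, Semould_nil]
    have hu' : ∀ x ∈ u, x ∈ Ω := fun x hx => hu x (by simp [hx])
    have hv' : ∀ x ∈ v, x ∈ Ω := fun x hx => hv x (by simp [hx])
    simp only [List.length_append, List.length_singleton] at h
    have h1 := ih u (v ++ [b]) (by simp; omega) hu' hv
    have h2 := ih (u ++ [a]) v (by simp; omega) hu hv'
    have h3 := ih u v (by omega) hu' hv'
    have mA := sum_mem_snoc hadd u a (hu a (by simp)) hu'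
    have mB := sum_mem_snoc hadd v b (hv b (by simp)) hv'
    have nA := sub_ne_zero.mpr (hω _ mA)
    have nB := sub_ne_zero.mpr (hω _ mB)
    have nC := sub_ne_zero.mpr (hω _ (hadd _ mA _ mB))
    have e1 : u.sum + (v ++ [b]).sum + a = (u.sum + a) + (v.sum + b) := by simp; ring
    have e2 : (u ++ [a]).sum + v.sum + b = (u.sum + a) + (v.sum + b) := by simp; ring
    have e3 : u.sum + v.sum + (a + b) = (u.sum + a) + (v.sum + b) := by ring
    have key : cshuffleSum Semould (u ++ [a]) (v ++ [b]) =
        ((cshuffles u (v ++ [b])).map (fun w => Semould (w ++ [a]))).sum +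
        ((cshuffles (u ++ [a]) v).map (fun w => Semould (w ++ [b]))).sum +
        ((cshuffles u v).map (fun w => Semould (w ++ [a + b]))).sum := by
      simp only [cshuffleSum, csh_snoc a b _ u v le_rfl, Multiset.map_add, Multiset.map_map,
        Function.comp_def, Multiset.sum_add]
    rw [key, sum_snoc, sum_snoc, sum_snoc, h1, h2, h3, e1, e2, e3, Semould_snoc, Semould_snoc]
    rw [neg_add (u.sum + a), Complex.exp_add] at nC ⊢
    rw [Complex.exp_add a b]
    generalize Complex.exp (-(u.sum + a)) = A at *
    generalize Complex.exp (-(v.sum + b)) = B at *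
    field_simp
    ring

theorem Semould_symetrel (Ω : Set ℂ)
    (hadd : ∀ a ∈ Ω, ∀ b ∈ Ω, a + b ∈ Ω)
    (hω : ∀ ω ∈ Ω, Complex.exp (-ω) ≠ 1) :
    Semould [] = 1 ∧
      ∀ u v : List ℂ, (∀ x ∈ u, x ∈ Ω) → (∀ x ∈ v, x ∈ Ω) →
        cshuffleSum Semould u v = Semould u * Semould v := by
  exact ⟨Semould_nil, fun u v hu hv => main_aux Ω hadd hω _ u v le_rfl hu hv⟩

end Moulds
end

section
/- Let K be a ℚ-algebra and Ω a set. For every symétral mould M on Ω there exists an alternal mould N such that M = exp(N), where exp(N) = Σ_{n≥0} N^{×n}/n! with N^{×0} = 1^• (this sum is pointwise finite on each word, since N^∅ = 0 implies (N^{×n})^w = 0 whenever n exceeds the length of w). -/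
namespace Moulds

/- STATEMENT 10: Over a ℚ-algebra K, every symétral mould M is the exponential of
some alternal mould N: M = exp(N) = Σ_{n≥0} N^{×n}/n!, the sum being pointwise
finite since (N^{×n})^w = 0 for n > length(w) when N^∅ = 0. -/

variable {Ω : Type*} {K : Type*} [CommRing K] [Algebra ℚ K]

/-- Iterated mould multiplication power, N^{×0} = 1^•. -/
def mpow (N : List Ω → K) : ℕ → (List Ω → K)
  | 0 => mone
  | n + 1 => mmul N (mpow N n)

/-- The mould exponential exp(N) = Σ_{n≥0} N^{×n}/n!; since N^∅ = 0 the terms with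
n > length(w) vanish on w, so the sum may be truncated at n = length(w). -/
def expMould (N : List Ω → K) : List Ω → K :=
  fun w => ∑ n ∈ Finset.range (w.length + 1),
    algebraMap ℚ K (1 / n.factorial) * mpow N n w

/-! ### Basic recursion formulas -/

theorem mmul_nil {R : Type*} [CommRing R] (M N : List Ω → R) : mmul M N [] = M [] * N [] := by
  simp [mmul]

theorem mmul_cons {R : Type*} [CommRing R] (M N : List Ω → R) (a : Ω) (w : List Ω) :
    mmul M N (a :: w) = M [] * N (a :: w) + mmul (fun x => M (a :: x)) N w := by
  simp only [mmul, List.length_cons]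
  rw [Finset.sum_range_succ']
  simp [add_comm]

theorem mmul_add_left {R : Type*} [CommRing R] (M M' N : List Ω → R) (w : List Ω) :
    mmul (fun x => M x + M' x) N w = mmul M N w + mmul M' N w := by
  simp [mmul, add_mul, Finset.sum_add_distrib]

theorem mmul_add_right {R : Type*} [CommRing R] (M N N' : List Ω → R) (w : List Ω) :
    mmul M (fun x => N x + N' x) w = mmul M N w + mmul M N' w := by
  simp [mmul, mul_add, Finset.sum_add_distrib]

theorem mmul_smul_left {R : Type*} [CommRing R] (c : R) (M N : List Ω → R) (w : List Ω) :
    mmul (fun x => c * M x) N w = c * mmul M N w := by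
  simp [mmul, mul_assoc, Finset.mul_sum]

theorem mmul_assoc' {R : Type*} [CommRing R] (N P : List Ω → R) (w : List Ω) :
    ∀ M : List Ω → R, mmul (mmul M N) P w = mmul M (mmul N P) w := by
  induction w with
  | nil => intro M; simp [mmul_nil, mul_assoc]
  | cons a w ih =>
    intro M
    rw [mmul_cons, mmul_cons M, mmul_nil, mmul_cons N P]
    simp only [mmul_cons]
    rw [mmul_add_left, mmul_smul_left]
    have := ih (fun x => M (a :: x))
    rw [this]
    ring

theorem mmul_zero_left {R : Type*} [CommRing R] (N : List Ω → R) (w : List Ω) :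
    mmul (fun _ => 0) N w = 0 := by simp [mmul]

theorem mone_mmul {R : Type*} [CommRing R] (N : List Ω → R) (w : List Ω) :
    mmul mone N w = N w := by
  cases w with
  | nil => simp [mmul_nil, mone]
  | cons a w => simp [mmul_cons, mone, mmul_zero_left]

theorem mmul_mone {R : Type*} [CommRing R] (w : List Ω) :
    ∀ M : List Ω → R, mmul M mone w = M w := by
  induction w with
  | nil => intro M; simp [mmul_nil, mone]
  | cons a w ih => intro M; rw [mmul_cons, ih]; simp [mone]

/-- The ring of moulds. -/
def Mld (Ω K : Type*) := List Ω → K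

instance : AddCommGroup (Mld Ω K) := inferInstanceAs (AddCommGroup (List Ω → K))

instance : Ring (Mld Ω K) :=
  { (inferInstance : AddCommGroup (Mld Ω K)) with
    mul := fun M N => (mmul M N : List Ω → K)
    one := (mone : List Ω → K)
    mul_assoc := fun M N P => funext fun w => mmul_assoc' N P w M
    one_mul := fun M => funext fun w => mone_mmul M w
    mul_one := fun M => funext fun w => mmul_mone w M
    left_distrib := fun M N P => funext fun w => mmul_add_right M N P w
    right_distrib := fun M N P => funext fun w => mmul_add_left M N P w
    zero_mul := fun M => funext fun w => mmul_zero_left M w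
    mul_zero := fun M => funext fun w => by
      change mmul M (fun _ => 0) w = 0
      simp [mmul] }

theorem Mld.mul_def (M N : Mld Ω K) : M * N = (mmul M N : List Ω → K) := rfl

theorem Mld.pow_def (M : Mld Ω K) (n : ℕ) : M ^ n = (mpow M n : List Ω → K) := by
  induction n with
  | zero => rfl
  | succ n ih => rw [pow_succ', ih]; rfl

theorem Mld.sum_apply {ι : Type*} (s : Finset ι) (f : ι → Mld Ω K) (w : List Ω) :
    (∑ i ∈ s, f i) w = ∑ i ∈ s, f i w :=
  Finset.sum_apply w s (f : ι → List Ω → K)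

theorem Mld.mul_natCast_apply (M : Mld Ω K) (k : ℕ) (w : List Ω) :
    (M * (k : Mld Ω K)) w = k * M w := by
  rw [← nsmul_eq_mul', ← nsmul_eq_mul]
  rfl

theorem mpow_eq_zero (D : List Ω → K) (hD : D [] = 0) (n : ℕ) :
    ∀ w : List Ω, w.length < n → mpow D n w = 0 := by
  induction n with
  | zero => intro w hw; omega
  | succ n ih =>
    intro w hw
    simp only [mpow, mmul]
    refine Finset.sum_eq_zero fun i hi => ?_
    rcases Nat.eq_zero_or_pos i with rfl | hi0
    · simp [hD]
    · rw [Finset.mem_range] at hi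
      rw [ih, mul_zero]
      rw [List.length_drop]; omega

theorem mpow_add (M : List Ω → K) (k l : ℕ) :
    mpow M (k + l) = mmul (mpow M k) (mpow M l) := by
  have key : ∀ M' : Mld Ω K, (mpow M' (k + l) : List Ω → K) = mmul (mpow M' k) (mpow M' l) := by
    intro M'
    have h := pow_add M' k l
    have h1 := Mld.mul_def (M' ^ k) (M' ^ l)
    rw [h1, Mld.pow_def M' (k + l), Mld.pow_def M' k, Mld.pow_def M' l] at h
    exact h
  exact key M

theorem mpow_binom (M : List Ω → K) (hM : M [] = 1) (k : ℕ) (w : List Ω) :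
    mpow M k w = ∑ n ∈ Finset.range (w.length + 1),
      (k.choose n : K) * mpow (fun x => M x - mone x) n w := by
  set D : List Ω → K := fun x => M x - mone x with hDdef
  have hD : D [] = 0 := by simp [hDdef, hM, mone]
  obtain ⟨M', hM'⟩ : ∃ M' : Mld Ω K, M' = M := ⟨M, rfl⟩
  obtain ⟨D', hD'⟩ : ∃ D' : Mld Ω K, D' = D := ⟨D, rfl⟩
  have h1 : M' = D' + 1 := by
    funext w
    change M' w = D' w + mone w
    rw [hM', hD', hDdef]
    ring
  have h2 := (Commute.one_right D').add_pow k
  rw [← h1] at h2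
  have h3 := congrFun (h2) w
  rw [Mld.pow_def, Mld.sum_apply, hM'] at h3
  rw [h3]
  have h4 : ∀ n, (D' ^ n * 1 ^ (k - n) * (k.choose n : Mld Ω K)) w
      = (k.choose n : K) * mpow D n w := by
    intro n
    rw [Mld.mul_natCast_apply, one_pow, mul_one, Mld.pow_def, hD']
  simp only [h4]
  have e1 : ∑ n ∈ Finset.range (k + 1), (k.choose n : K) * mpow D n w
      = ∑ n ∈ Finset.range (k + 1 + (w.length + 1)), (k.choose n : K) * mpow D n w := by
    refine Finset.sum_subset (Finset.range_subset_range.2 (by omega)) fun n _ hn => ?_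
    rw [Nat.choose_eq_zero_of_lt (by simpa using hn)]; simp
  have e2 : ∑ n ∈ Finset.range (w.length + 1), (k.choose n : K) * mpow D n w
      = ∑ n ∈ Finset.range (k + 1 + (w.length + 1)), (k.choose n : K) * mpow D n w := by
    refine Finset.sum_subset (Finset.range_subset_range.2 (by omega)) fun n _ hn => ?_
    rw [mpow_eq_zero D hD n w (by simpa using hn), mul_zero]
  rw [e1, e2]

/-! ### Shuffles -/

theorem shuffleSum_nil_left {R : Type*} [CommRing R] (M : List Ω → R) (v : List Ω) :
    shuffleSum M [] v = M v := by
  simp [shuffleSum, shuffles]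

theorem shuffleSum_nil_right {R : Type*} [CommRing R] (M : List Ω → R) (u : List Ω) :
    shuffleSum M u [] = M u := by
  cases u <;> simp [shuffleSum, shuffles]

theorem shuffleSum_cons {R : Type*} [CommRing R] (M : List Ω → R) (a b : Ω) (u v : List Ω) :
    shuffleSum M (a :: u) (b :: v) =
      shuffleSum (fun x => M (a :: x)) u (b :: v) + shuffleSum (fun x => M (b :: x)) (a :: u) v := by
  simp [shuffleSum, shuffles, Function.comp_def]

theorem shuffleSum_add {R : Type*} [CommRing R] (M N : List Ω → R) (u v : List Ω) :
    shuffleSum (fun x => M x + N x) u v = shuffleSum M u v + shuffleSum N u v := by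
  simp [shuffleSum, Multiset.sum_map_add]

theorem shuffleSum_smul {R : Type*} [CommRing R] (c : R) (N : List Ω → R) (u v : List Ω) :
    shuffleSum (fun x => c * N x) u v = c * shuffleSum N u v := by
  simp [shuffleSum, Multiset.sum_map_mul_left]

theorem shuffleSum_hom {R S : Type*} [CommRing R] [CommRing S] (f : R →+ S)
    (N : List Ω → R) (u v : List Ω) :
    f (shuffleSum N u v) = shuffleSum (fun x => f (N x)) u v := by
  simp [shuffleSum, map_multiset_sum, Function.comp_def]

theorem shuffleSum_mmul (N : List Ω → K) (L : ℕ) : ∀ (M : List Ω → K) (u v : List Ω),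
    u.length + v.length = L → shuffleSum (mmul M N) u v =
      ∑ i ∈ Finset.range (u.length + 1), ∑ j ∈ Finset.range (v.length + 1),
        shuffleSum M (u.take i) (v.take j) * shuffleSum N (u.drop i) (v.drop j) := by
  induction L with
  | zero =>
    intro M u v h
    have hu : u = [] := List.length_eq_zero_iff.1 (by omega)
    have hv : v = [] := List.length_eq_zero_iff.1 (by omega)
    subst hu hv
    simp [shuffleSum_nil_left, mmul_nil]
  | succ L ih =>
    intro M u v h
    match u, v with
    | [], v => simp [shuffleSum_nil_left, mmul]
    | a :: u, [] => simp [shuffleSum_nil_right, mmul]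
    | a :: u, b :: v =>
      simp only [List.length_cons] at h
      rw [shuffleSum_cons]
      simp only [mmul_cons]
      rw [shuffleSum_add, shuffleSum_add, shuffleSum_smul, shuffleSum_smul]
      have i1 := ih (fun x => M (a :: x)) u (b :: v) (by simp; omega)
      have i2 := ih (fun x => M (b :: x)) (a :: u) v (by simp; omega)
      rw [i1, i2]
      have key : M [] * shuffleSum N (a :: u) (b :: v) =
        M [] * shuffleSum (fun x => N (a :: x)) u (b :: v) +
        M [] * shuffleSum (fun x => N (b :: x)) (a :: u) v := by
          rw [shuffleSum_cons, mul_add]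
      simp only [List.length_cons]
      rw [Finset.sum_range_succ' _ (u.length + 1), Finset.sum_range_succ' _ (u.length + 1)]
      simp only [Finset.sum_range_succ' _ (v.length + 1), List.take_succ_cons, List.drop_succ_cons,
        List.take_zero, List.drop_zero, shuffleSum_nil_left, shuffleSum_nil_right,
        shuffleSum_cons M, add_mul, Finset.sum_add_distrib]
      rw [key]
      ring

theorem symetral_mmul (M N : List Ω → K) (hM : Symetral M) (hN : Symetral N) :
    Symetral (mmul M N) := by
  refine ⟨by rw [mmul_nil, hM.1, hN.1, mul_one], fun u v => ?_⟩
  rw [shuffleSum_mmul N _ M u v rfl]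
  simp only [hM.2, hN.2, mmul]
  rw [Finset.sum_mul_sum]
  refine Finset.sum_congr rfl fun i _ => Finset.sum_congr rfl fun j _ => ?_
  ring

theorem symetral_mone : Symetral (mone : List Ω → K) := by
  refine ⟨rfl, fun u v => ?_⟩
  match u, v with
  | [], v => simp [shuffleSum_nil_left, mone]
  | a :: u, [] => simp [shuffleSum_nil_right, mone]
  | a :: u, b :: v => rw [shuffleSum_cons]; simp [mone, shuffleSum]

theorem symetral_mpow (M : List Ω → K) (hM : Symetral M) (n : ℕ) : Symetral (mpow M n) := by
  induction n with
  | zero => exact symetral_mone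
  | succ n ih => exact symetral_mmul M _ hM ih

/-! ### Polynomials vanishing on the natural numbers -/

open Polynomial in
theorem poly_zero_aux {R : Type*} [CommRing R] [Algebra ℚ R] (d : ℕ) : ∀ (m : ℕ) (p : R[X]),
    p.natDegree ≤ d → (∀ k : ℕ, m ≤ k → p.eval (k : R) = 0) → p = 0 := by
  induction d with
  | zero =>
    intro m p hp h
    rw [Polynomial.eq_C_of_natDegree_le_zero hp] at h ⊢
    have := h m le_rfl
    rw [eval_C] at this
    rw [this, C_0]
  | succ d ih =>
    intro m p hp h
    obtain ⟨q, rfl⟩ := Polynomial.dvd_iff_isRoot.2 (h m le_rfl)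
    by_cases hq : q = 0
    · rw [hq, mul_zero]
    rw [(monic_X_sub_C (m : R)).natDegree_mul' hq] at hp
    have : Nontrivial R := by
      by_contra hn
      rw [not_nontrivial_iff_subsingleton] at hn
      exact hq (Subsingleton.elim _ _)
    rw [natDegree_X_sub_C] at hp
    refine absurd (ih (m + 1) q (by omega) fun k hk => ?_) hq
    have hk' := h k (by omega)
    rw [eval_mul, eval_sub, eval_X, eval_C] at hk'
    have hu : IsUnit ((k : R) - (m : R)) := by
      have h0 : ((k : ℚ) - (m : ℚ)) ≠ 0 := by
        rw [sub_ne_zero]; exact_mod_cast (by omega : k ≠ m)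
      have := (IsUnit.mk0 _ h0).map (algebraMap ℚ R)
      simpa using this
    exact (hu.mul_right_eq_zero).1 hk'

open Polynomial in
theorem poly_ext_nat {R : Type*} [CommRing R] [Algebra ℚ R] (p q : R[X])
    (h : ∀ k : ℕ, p.eval (k : R) = q.eval (k : R)) : p = q := by
  rw [← sub_eq_zero]
  exact poly_zero_aux _ 0 _ le_rfl fun k _ => by rw [eval_sub, h, sub_self]

/-- The polynomial interpolating the natural powers of a mould at a word. -/
noncomputable def powPoly (M : List Ω → K) (w : List Ω) : Polynomial K :=
  ∑ n ∈ Finset.range (w.length + 1),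
    Polynomial.C (algebraMap ℚ K (1 / n.factorial) * mpow (fun x => M x - mone x) n w) *
      descPochhammer K n

theorem powPoly_eval (M : List Ω → K) (hM : M [] = 1) (w : List Ω) (k : ℕ) :
    (powPoly M w).eval (k : K) = mpow M k w := by
  rw [mpow_binom M hM, powPoly, Polynomial.eval_finsetSum]
  refine Finset.sum_congr rfl fun n _ => ?_
  rw [Polynomial.eval_mul, Polynomial.eval_C, descPochhammer_eval_eq_descFactorial,
    Nat.descFactorial_eq_factorial_mul_choose]
  have : algebraMap ℚ K (1 / n.factorial) * (n.factorial : K) = 1 := by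
    rw [← map_natCast (algebraMap ℚ K), ← map_mul, one_div, inv_mul_cancel₀, map_one]
    exact_mod_cast n.factorial_ne_zero
  push_cast
  linear_combination (k.choose n : K) * mpow (fun x => M x - mone x) n w * this

theorem powPoly_nil (M : List Ω → K) : powPoly M [] = 1 := by
  rw [powPoly, List.length_nil, zero_add, Finset.sum_range_one, descPochhammer_zero, mul_one]
  simp only [mpow, mone, Nat.factorial_zero, Nat.cast_one, div_one, map_one, mul_one]

theorem powPoly_coeff_zero (M : List Ω → K) (hM : M [] = 1) (w : List Ω) :
    (powPoly M w).coeff 0 = mone w := by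
  have := powPoly_eval M hM w 0
  rw [Nat.cast_zero, ← Polynomial.coeff_zero_eq_eval_zero] at this
  exact this

open Polynomial in
theorem powPoly_shift (M : List Ω → K) (hM : M [] = 1) (w : List Ω) (k : ℕ) :
    (powPoly M w).comp (X + C (k : K)) =
      ∑ i ∈ Finset.range (w.length + 1), C (mpow M k (w.take i)) * powPoly M (w.drop i) := by
  refine poly_ext_nat _ _ fun l => ?_
  rw [eval_comp, eval_finsetSum]
  simp only [eval_add, eval_X, eval_C, eval_mul, powPoly_eval M hM]
  rw [← Nat.cast_add, powPoly_eval M hM, add_comm, mpow_add]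
  rfl

open Polynomial in
theorem powPoly_derivative (M : List Ω → K) (hM : M [] = 1) (w : List Ω) :
    derivative (powPoly M w) = ∑ i ∈ Finset.range (w.length + 1),
      C ((powPoly M (w.take i)).coeff 1) * powPoly M (w.drop i) := by
  have key : ((powPoly M w).map C).comp (X + C X) =
      ∑ i ∈ Finset.range (w.length + 1),
        (powPoly M (w.take i)).map C * C (powPoly M (w.drop i)) := by
    refine poly_ext_nat _ _ fun k => ?_
    have h1 : ∀ x, eval (k : K[X]) ((powPoly M x).map C) = C (mpow M k x) := by
      intro x
      rw [← powPoly_eval M hM, ← C_eq_natCast, eval_map, eval₂_at_apply]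
    rw [eval_comp, eval_finsetSum]
    simp only [eval_mul, eval_C, h1]
    rw [← powPoly_shift M hM, eval_map, comp, eval_add, eval_X, eval_C, add_comm, ← C_eq_natCast]
  have h2 := congrArg (fun p => eval 0 (derivative p)) key
  simp only [derivative_comp, derivative_sum, derivative_mul, derivative_C, derivative_map,
    eval_finsetSum, eval_mul, eval_add, mul_zero, add_zero, eval_C, eval_comp, eval_X, eval_map,
    derivative_add, derivative_X, eval_one, zero_add, eval₂_C_X, one_mul] at h2
  rw [h2]
  refine Finset.sum_congr rfl fun i _ => ?_
  congr 1
  rw [← C_0, eval₂_at_apply, ← coeff_zero_eq_eval_zero, coeff_derivative]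
  simp

theorem powPoly_coeff (M : List Ω → K) (hM : M [] = 1) (n : ℕ) : ∀ w : List Ω,
    (powPoly M w).coeff n =
      algebraMap ℚ K (1 / n.factorial) * mpow (fun x => (powPoly M x).coeff 1) n w := by
  induction n with
  | zero => intro w; rw [powPoly_coeff_zero M hM]; simp [mpow]
  | succ n ih =>
    intro w
    have h := congrArg (fun p => Polynomial.coeff p n) (powPoly_derivative M hM w)
    simp only [Polynomial.coeff_derivative, Polynomial.finsetSum_coeff,
      Polynomial.coeff_C_mul, ih] at h
    have h1 : algebraMap ℚ K (1 / (n + 1).factorial) * ((n : K) + 1)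
        = algebraMap ℚ K (1 / n.factorial) := by
      have : ((n : K) + 1) = algebraMap ℚ K (n + 1) := by simp
      rw [this, ← map_mul]
      congr 1
      rw [Nat.factorial_succ]
      have := n.factorial_ne_zero
      push_cast
      field_simp
    have h2 : algebraMap ℚ K (1 / (n + 1)) * ((n : K) + 1) = 1 := by
      have : ((n : K) + 1) = algebraMap ℚ K (n + 1) := by simp
      rw [this, ← map_mul, one_div, inv_mul_cancel₀ (by positivity), map_one]
    have h3 : (powPoly M w).coeff (n + 1) * ((n : K) + 1) =
        algebraMap ℚ K (1 / n.factorial) * mpow (fun x => (powPoly M x).coeff 1) (n + 1) w := by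
      rw [h]
      simp only [mpow, mmul, Finset.mul_sum]
      refine Finset.sum_congr rfl fun i _ => ?_
      ring
    rw [← h1] at h3
    linear_combination algebraMap ℚ K (1 / (n + 1)) * h3 -
      ((powPoly M w).coeff (n + 1) - algebraMap ℚ K (1 / (n + 1).factorial) *
        mpow (fun x => (powPoly M x).coeff 1) (n + 1) w) * h2

theorem powPoly_shuffle (M : List Ω → K) (hM : Symetral M) (u v : List Ω) :
    shuffleSum (powPoly M) u v = powPoly M u * powPoly M v := by
  refine poly_ext_nat _ _ fun k => ?_
  rw [Polynomial.eval_mul, powPoly_eval M hM.1, powPoly_eval M hM.1,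
    ← (symetral_mpow M hM k).2 u v]
  have := shuffleSum_hom (Polynomial.evalRingHom (k : K)).toAddMonoidHom (powPoly M) u v
  simp only [RingHom.toAddMonoidHom_eq_coe, AddMonoidHom.coe_coe, Polynomial.coe_evalRingHom,
    powPoly_eval M hM.1] at this
  exact this

theorem symetral_is_exp_of_alternal (M : List Ω → K) (hM : Symetral M) :
    ∃ N : List Ω → K, Alternal N ∧ M = expMould N := by
  have hN0 : (powPoly M []).coeff 1 = 0 := by
    rw [powPoly_nil, Polynomial.coeff_one]; simp
  refine ⟨fun w => (powPoly M w).coeff 1, ⟨hN0, fun u v hu hv => ?_⟩, ?_⟩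
  · have h1 := shuffleSum_hom (Polynomial.lcoeff K 1).toAddMonoidHom (powPoly M) u v
    simp only [LinearMap.toAddMonoidHom_coe, Polynomial.lcoeff_apply] at h1
    rw [← h1, powPoly_shuffle M hM, Polynomial.mul_coeff_one, powPoly_coeff_zero M hM.1,
      powPoly_coeff_zero M hM.1]
    cases u with
    | nil => exact absurd rfl hu
    | cons a u =>
      cases v with
      | nil => exact absurd rfl hv
      | cons b v => simp [mone]
  · funext w
    have h1 := powPoly_eval M hM.1 w 1
    have h2 : mpow M 1 w = M w := mmul_mone w M
    rw [h2] at h1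
    rw [← h1, Nat.cast_one, expMould]
    have hdeg : (powPoly M w).natDegree < w.length + 1 := by
      rw [Nat.lt_succ_iff, Polynomial.natDegree_le_iff_coeff_eq_zero]
      intro n hn
      rw [powPoly_coeff M hM.1, mpow_eq_zero _ hN0 n w hn, mul_zero]
    rw [Polynomial.eval_eq_sum_range' hdeg]
    refine Finset.sum_congr rfl fun n _ => ?_
    rw [one_pow, mul_one, powPoly_coeff M hM.1]

end Moulds
end

section
/- Let K be a field and Ω a commutative semigroup. A mould M on Ω possesses a two-sided inverse for mould composition if and only if M^∅ = 0 and M^{(ω)} ≠ 0 for every one-letter word (ω), ω ∈ Ω; consequently the set of moulds satisfying these two conditions is a group under mould composition, with neutral element I^•. -/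
namespace Moulds

/- STATEMENT 12: Over a field K and a commutative semigroup Ω, a mould M has a
two-sided inverse for mould composition iff M^∅ = 0 and M^{(ω)} ≠ 0 for every
one-letter word; consequently these moulds form a group under composition with
neutral element I^• (closure, neutrality and associativity on this set are
recorded alongside). -/

variable {Ω : Type*} [AddCommSemigroup Ω] {K : Type*} [Field K]

/-- The conditions cutting out the composition group. -/
def CompInvertible (M : List Ω → K) : Prop :=
  M [] = 0 ∧ ∀ ω : Ω, M [ω] ≠ 0

section Helpers

variable {Y : Type*}

/-- All cuts of a word into a prefix and a suffix. -/
def cuts : List Y → List (List Y × List Y)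
  | [] => [([], [])]
  | a :: t => ([], a :: t) :: (cuts t).map (fun c => (a :: c.1, c.2))

/-- Sum of a function over a list. -/
def lsum {α R : Type*} [CommRing R] (l : List α) (f : α → R) : R := (l.map f).sum

variable {α β R : Type*} [CommRing R]

theorem lsum_nil (f : α → R) : lsum [] f = 0 := rfl

theorem lsum_cons (a : α) (l : List α) (f : α → R) : lsum (a :: l) f = f a + lsum l f := by
  simp [lsum]

theorem lsum_map (g : α → β) (l : List α) (f : β → R) :
    lsum (l.map g) f = lsum l (fun x => f (g x)) := by
  simp [lsum, Function.comp_def]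

theorem lsum_flatMap (g : α → List β) (l : List α) (f : β → R) :
    lsum (l.flatMap g) f = lsum l (fun x => lsum (g x) f) := by
  induction l with
  | nil => rfl
  | cons a l ih => rw [lsum_cons, ← ih]; simp [lsum]

theorem lsum_add (l : List α) (f g : α → R) :
    lsum l (fun x => f x + g x) = lsum l f + lsum l g := by
  induction l with
  | nil => simp [lsum_nil]
  | cons a l ih => simp only [lsum_cons, ih]; ring

theorem lsum_mul_left (l : List α) (c : R) (f : α → R) :
    lsum l (fun x => c * f x) = c * lsum l f := by
  induction l with
  | nil => simp [lsum_nil]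
  | cons a l ih => simp only [lsum_cons, ih]; ring

theorem lsum_mul_right (l : List α) (c : R) (f : α → R) :
    lsum l (fun x => f x * c) = lsum l f * c := by
  induction l with
  | nil => simp [lsum_nil]
  | cons a l ih => simp only [lsum_cons, ih]; ring

theorem lsum_congr (l : List α) {f g : α → R} (h : ∀ x ∈ l, f x = g x) :
    lsum l f = lsum l g := by
  unfold lsum
  rw [List.map_congr_left h]

theorem lsum_zero (l : List α) : lsum l (fun _ => (0 : R)) = 0 := by
  simp [lsum]

theorem cuts_length (w : List Y) : ∀ c ∈ cuts w, c.1 ++ c.2 = w := by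
  induction w with
  | nil => simp [cuts]
  | cons a t ih =>
    intro c hc
    simp only [cuts, List.mem_cons, List.mem_map] at hc
    rcases hc with rfl | ⟨d, hd, rfl⟩
    · rfl
    · simp [ih d hd]

theorem cuts_map {Z : Type*} (f : Y → Z) (w : List Y) :
    cuts (w.map f) = (cuts w).map (fun c => (c.1.map f, c.2.map f)) := by
  induction w with
  | nil => rfl
  | cons a t ih => simp [cuts, ih]

/-- Coassociativity of deconcatenation. -/
theorem cuts_coassoc (w : List Y) : ∀ (F : List Y → List Y → List Y → R),
    lsum (cuts w) (fun c => lsum (cuts c.2) (fun d => F c.1 d.1 d.2)) =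
    lsum (cuts w) (fun c => lsum (cuts c.1) (fun d => F d.1 d.2 c.2)) := by
  induction w with
  | nil => intro F; rfl
  | cons a t ih =>
    intro F
    simp only [cuts, lsum_cons, lsum_map, lsum_nil, lsum_add]
    rw [ih (fun x y z => F (a :: x) y z)]
    ring

theorem splits_sum (t : List Y) : ∀ (a : Y) (Φ : List (Y × List Y) → R),
    lsum (splits (a :: t)) Φ =
    lsum (cuts t) (fun c => lsum (splits c.2) (fun p => Φ ((a, c.1) :: p))) := by
  induction t with
  | nil => intro a Φ; simp [splits, cuts, lsum]
  | cons b t ih =>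
    intro a Φ
    rw [splits, lsum_flatMap, ih b]
    simp only [cuts, lsum_cons, lsum_map, lsum_nil, lsum_add, lsum_zero]
    rw [ih b]
    ring

theorem splits_cuts : ∀ (n : ℕ) (w : List Y), w.length ≤ n →
    ∀ (Φ : List (Y × List Y) → List (Y × List Y) → R),
    lsum (splits w) (fun p => lsum (cuts p) (fun c => Φ c.1 c.2)) =
    lsum (cuts w) (fun c => lsum (splits c.1) (fun p => lsum (splits c.2) (fun q => Φ p q))) := by
  intro n
  induction n with
  | zero =>
    intro w hw Φ
    obtain rfl : w = [] := by simpa using hw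
    simp [splits, cuts, lsum]
  | succ n ih =>
    intro w hw Φ
    cases w with
    | nil => simp [splits, cuts, lsum]
    | cons a t =>
      rw [splits_sum]
      simp only [cuts, lsum_cons, lsum_map, lsum_nil, lsum_add]
      have h1 : lsum (splits ([] : List Y)) (fun p => lsum (splits (a :: t)) (fun q => Φ p q))
          = lsum (splits (a :: t)) (fun q => Φ [] q) := by
        simp [splits, lsum]
      rw [h1, splits_sum]
      congr 1
      simp only [splits_sum]
      rw [← cuts_coassoc t (fun x y z => lsum (splits y) (fun p => lsum (splits z)
        (fun q => Φ ((a, x) :: p) q)))]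
      apply lsum_congr
      intro c hc
      have := congrArg List.length (cuts_length t c hc)
      simp only [List.length_append] at this
      simp only [List.length_cons] at hw
      exact ih c.2 (by omega) (fun p q => Φ ((a, c.1) :: p) q)

theorem splits_length (w : List Y) : ∀ p ∈ splits w, p.length ≤ w.length := by
  induction w with
  | nil => simp [splits]
  | cons a t ih =>
    intro p hp
    simp only [splits, List.mem_flatMap] at hp
    obtain ⟨q, hq, hp⟩ := hp
    have := ih q hq
    cases q with
    | nil => simp at hp; subst hp; simp
    | cons b q =>
      simp at hp
      rcases hp with rfl | rfl <;> simp at this ⊢ <;> omega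

theorem splits_singletons (w : List Y) : ∀ (F : List (Y × List Y) → R),
    lsum (splits w) F = lsum (splits w) (fun p => if p.length < w.length then F p else 0)
      + F (w.map (fun a => (a, []))) := by
  induction w with
  | nil => intro F; simp [splits, lsum]
  | cons a t ih =>
    intro F
    cases t with
    | nil => simp [splits, lsum]
    | cons b t =>
      rw [splits_sum, splits_sum]
      simp only [cuts, lsum_cons, lsum_map]
      rw [ih (fun p => F ((a, []) :: p))]
      have h : lsum (cuts t) (fun c => lsum (splits c.2) (fun p => F ((a, b :: c.1) :: p))) =
          lsum (cuts t) (fun c => lsum (splits c.2) (fun p =>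
            if ((a, b :: c.1) :: p).length < (a :: b :: t).length
              then F ((a, b :: c.1) :: p) else 0)) := by
        apply lsum_congr
        intro c hc
        apply lsum_congr
        intro p hp
        have h1 := congrArg List.length (cuts_length t c hc)
        have h2 := splits_length _ p hp
        simp only [List.length_append] at h1
        rw [if_pos]
        simp only [List.length_cons]
        omega
      rw [h]
      simp only [List.length_cons, List.map_cons, add_lt_add_iff_right]
      ring

end Helpers

section Comp

variable {S : Type*} [AddCommSemigroup S] {F : Type*} [Field F]

/-- Product of a mould over blocks. -/
def bprod (N : List S → F) (p : List (S × List S)) : F := (p.map (fun b => N (b.1 :: b.2))).prod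

theorem bprod_cons (N : List S → F) (b : S × List S) (p : List (S × List S)) :
    bprod N (b :: p) = N (b.1 :: b.2) * bprod N p := by simp [bprod]

theorem mcomp_eq (M N : List S → F) (w : List S) :
    mcomp M N w = lsum (splits w) (fun p => M (p.map blockSum) * bprod N p) := rfl

theorem mcomp_nil (M N : List S → F) : mcomp M N [] = M [] := by
  simp [mcomp, splits]

theorem mcomp_single (M N : List S → F) (a : S) : mcomp M N [a] = M [a] * N [a] := by
  simp [mcomp, splits, blockSum]

theorem mcomp_cons (M N : List S → F) (a : S) (t : List S) :
    mcomp M N (a :: t) = lsum (cuts t) (fun c => N (a :: c.1) *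
      mcomp (fun v => M (blockSum (a, c.1) :: v)) N c.2) := by
  rw [mcomp_eq, splits_sum]
  apply lsum_congr
  intro c _
  rw [mcomp_eq, ← lsum_mul_left]
  apply lsum_congr
  intro p _
  rw [bprod_cons, List.map_cons]
  ring

theorem foldl_add (u : List S) : ∀ a b : S,
    u.foldl (· + ·) (a + b) = a + u.foldl (· + ·) b := by
  induction u with
  | nil => intro a b; rfl
  | cons c u ih => intro a b; simp only [List.foldl_cons]; rw [add_assoc, ih]

/-- The blocks of a factorization have the same total sum as the word. -/
theorem blockSum_splits : ∀ (t : List S) (a x : S), ∀ p ∈ splits t,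
    blockSum (x, p.map blockSum) = blockSum (x, t) := by
  intro t
  induction t with
  | nil => intro a x p hp; simp [splits] at hp; subst hp; rfl
  | cons b t ih =>
    intro a x p hp
    simp only [splits, List.mem_flatMap] at hp
    obtain ⟨q, hq, hp⟩ := hp
    have h := ih a (x + b) q hq
    cases q with
    | nil => simp at hp; subst hp; simpa [blockSum] using h
    | cons c q =>
      simp only [List.mem_cons, List.not_mem_nil, or_false] at hp
      rcases hp with rfl | rfl
      · simp only [blockSum, List.map_cons, List.foldl_cons] at h ⊢
        rw [foldl_add c.2 b c.1, ← add_assoc, h]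
      · simpa [blockSum] using h

theorem mcomp_assoc_aux : ∀ (n : ℕ) (w : List S), w.length ≤ n → ∀ A B C : List S → F,
    mcomp (mcomp A B) C w = mcomp A (mcomp B C) w := by
  intro n
  induction n with
  | zero =>
    intro w hw A B C
    obtain rfl : w = [] := by simpa using hw
    simp [mcomp_nil]
  | succ n ih =>
    intro w hw A B C
    cases w with
    | nil => simp [mcomp_nil]
    | cons a t =>
      rw [mcomp_eq, splits_sum, mcomp_cons A]
      -- the common middle form
      have key : ∀ c ∈ cuts t, lsum (splits c.2) (fun p =>
            mcomp A B (((a, c.1) :: p).map blockSum) * bprod C ((a, c.1) :: p)) =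
          lsum (cuts c.2) (fun d => lsum (splits d.1) (fun p => lsum (splits d.2) (fun q =>
            C (a :: c.1) * (B (blockSum (a, c.1) :: p.map blockSum) * bprod C p *
              (mcomp (fun v => A (blockSum (a, c.1 ++ d.1) :: v)) B (q.map blockSum)
                * bprod C q))))) := by
        intro c _
        have h1 : ∀ p : List (S × List S),
            mcomp A B (((a, c.1) :: p).map blockSum) * bprod C ((a, c.1) :: p) =
            lsum (cuts p) (fun e => C (a :: c.1) *
              (B (blockSum (a, c.1) :: e.1.map blockSum) * bprod C e.1 *
              (mcomp (fun v => A (blockSum (blockSum (a, c.1), e.1.map blockSum) :: v)) B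
                (e.2.map blockSum) * bprod C e.2))) := by
          intro p
          rw [List.map_cons, mcomp_cons, cuts_map, lsum_map, ← lsum_mul_right]
          apply lsum_congr
          intro e he
          have h2 : bprod C p = bprod C e.1 * bprod C e.2 := by
            conv_lhs => rw [← cuts_length p e he]
            simp [bprod]
          rw [bprod_cons, h2]
          ring
        rw [lsum_congr _ (fun p _ => h1 p)]
        rw [splits_cuts _ c.2 le_rfl (fun e1 e2 => C (a :: c.1) *
              (B (blockSum (a, c.1) :: e1.map blockSum) * bprod C e1 *
              (mcomp (fun v => A (blockSum (blockSum (a, c.1), e1.map blockSum) :: v)) B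
                (e2.map blockSum) * bprod C e2)))]
        apply lsum_congr
        intro d _
        apply lsum_congr
        intro p hp
        have h3 : blockSum (blockSum (a, c.1), p.map blockSum) = blockSum (a, c.1 ++ d.1) := by
          rw [blockSum_splits d.1 a _ p hp]
          simp [blockSum]
        rw [h3]
      rw [lsum_congr _ key, cuts_coassoc t (fun x y z => lsum (splits y) (fun p =>
        lsum (splits z) (fun q =>
            C (a :: x) * (B (blockSum (a, x) :: p.map blockSum) * bprod C p *
              (mcomp (fun v => A (blockSum (a, x ++ y) :: v)) B (q.map blockSum)
                * bprod C q)))))]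
      apply lsum_congr
      intro c hc
      have hl := congrArg List.length (cuts_length t c hc)
      simp only [List.length_append] at hl
      simp only [List.length_cons] at hw
      rw [← ih c.2 (by omega), mcomp_eq B C, splits_sum, ← lsum_mul_right]
      apply lsum_congr
      intro d hd
      rw [cuts_length _ d hd, ← lsum_mul_right]
      apply lsum_congr
      intro p _
      rw [mcomp_eq _ C, ← lsum_mul_left]
      apply lsum_congr
      intro q _
      rw [bprod_cons, List.map_cons]
      ring

theorem mcomp_assoc (A B C : List S → F) : mcomp (mcomp A B) C = mcomp A (mcomp B C) := by
  funext w
  exact mcomp_assoc_aux _ w le_rfl A B C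

theorem lsum_cuts_first (t : List S) (f : List S → List S → F)
    (h : ∀ b u v, f (b :: u) v = 0) : lsum (cuts t) (fun c => f c.1 c.2) = f [] t := by
  cases t with
  | nil => simp [cuts, lsum]
  | cons b t => simp [cuts, lsum_cons, lsum_map, h, lsum_zero]

theorem lsum_cuts_last (t : List S) : ∀ (f : List S → List S → F)
    (_ : ∀ b u v, f u (b :: v) = 0), lsum (cuts t) (fun c => f c.1 c.2) = f t [] := by
  induction t with
  | nil => intro f h; simp [cuts, lsum]
  | cons b t ih =>
    intro f h
    rw [cuts, lsum_cons, lsum_map, h, ih (fun u v => f (b :: u) v) (fun _ _ _ => h _ _ _)]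
    simp

theorem mcomp_mId_aux : ∀ (w : List S) (M : List S → F), mcomp M mId w = M w := by
  intro w
  induction w with
  | nil => intro M; exact mcomp_nil _ _
  | cons a t ih =>
    intro M
    rw [mcomp_cons, lsum_cuts_first t (fun u v => mId (a :: u) *
      mcomp (fun x => M (blockSum (a, u) :: x)) mId v)]
    · rw [ih]; simp [mId, blockSum]
    · intro b u v; simp [mId]

theorem mId_mcomp (M : List S → F) (h : M [] = 0) : mcomp mId M = M := by
  funext w
  cases w with
  | nil => rw [mcomp_nil, h]; simp [mId]
  | cons a t =>
    rw [mcomp_cons, lsum_cuts_last t (fun u v => M (a :: u) *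
      mcomp (fun x => mId (blockSum (a, u) :: x)) M v)]
    · simp [mcomp_nil, mId]
    · intro b u v
      rw [mcomp_cons]
      simp [mcomp_eq, mId, lsum_zero]

/-- The left inverse of a mould, by recursion on the length. -/
noncomputable def linv (M : List S → F) (w : List S) : F :=
  (mId w - ((splits w).map (fun p => if h : p.length < w.length then
    linv M (p.map blockSum) * bprod M p else 0)).sum) / (w.map (fun a => M [a])).prod
termination_by w.length
decreasing_by simpa using h

theorem linv_mcomp (M : List S → F) (hM : ∀ a, M [a] ≠ 0) : mcomp (linv M) M = mId := by
  funext w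
  have hp : (w.map (fun a => M [a])).prod ≠ 0 := by
    apply List.prod_ne_zero
    simp [hM]
  have h1 : (w.map (fun a => (a, ([] : List S)))).map blockSum = w := by
    simp [Function.comp_def, blockSum]
  have h2 : bprod M (w.map (fun a => (a, ([] : List S)))) = (w.map (fun a => M [a])).prod := by
    simp [bprod, Function.comp_def]
  rw [mcomp_eq, splits_singletons, h1, h2, linv, div_mul_cancel₀ _ hp]
  simp [lsum]

end Comp

theorem mould_comp_inverse_iff_and_group :
    (∀ M : List Ω → K,
        (∃ N : List Ω → K, mcomp M N = mId ∧ mcomp N M = mId) ↔ CompInvertible M) ∧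
    CompInvertible (mId : List Ω → K) ∧
    (∀ M N : List Ω → K, CompInvertible M → CompInvertible N →
        CompInvertible (mcomp M N)) ∧
    (∀ M : List Ω → K, CompInvertible M → mcomp M mId = M ∧ mcomp mId M = M) ∧
    (∀ A B C : List Ω → K, CompInvertible A → CompInvertible B → CompInvertible C →
        mcomp (mcomp A B) C = mcomp A (mcomp B C)) := by
  have hclosed : ∀ M N : List Ω → K, mcomp M N = mId → CompInvertible M := by
    intro M N h
    refine ⟨?_, fun ω h0 => ?_⟩
    · have := congrFun h []
      rw [mcomp_nil] at this
      simpa [mId] using this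
    · have := congrFun h [ω]
      rw [mcomp_single, h0] at this
      simp [mId] at this
  refine ⟨fun M => ⟨?_, ?_⟩, ?_, ?_, ?_, ?_⟩
  · rintro ⟨N, h, _⟩
    exact hclosed M N h
  · intro hM
    have h1 := linv_mcomp M hM.2
    have hL := hclosed _ _ h1
    have h2 := linv_mcomp (linv M) hL.2
    refine ⟨linv M, ?_, h1⟩
    have h3 : linv (linv M) = M := by
      calc linv (linv M) = mcomp (linv (linv M)) mId := by
            funext w; rw [mcomp_mId_aux]
        _ = mcomp (linv (linv M)) (mcomp (linv M) M) := by rw [h1]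
        _ = mcomp mId M := by rw [← mcomp_assoc, h2]
        _ = M := mId_mcomp M hM.1
    rw [h3] at h2
    exact h2
  · exact ⟨by simp [mId], fun ω => by simp [mId]⟩
  · intro M N hM hN
    refine ⟨by rw [mcomp_nil]; exact hM.1, fun ω => ?_⟩
    rw [mcomp_single]
    exact mul_ne_zero (hM.2 ω) (hN.2 ω)
  · intro M hM
    exact ⟨funext fun w => mcomp_mId_aux w M, mId_mcomp M hM.1⟩
  · intro A B C _ _ _
    exact mcomp_assoc A B C

end Moulds
end

section
/- Let K be a field of characteristic zero and Ω a commutative semigroup. Then: (i) the product M × N of two symétral moulds is symétral, and the multiplicative inverse of a symétral mould is symétral; (ii) if B is a symétral mould and C an alternal mould, then B × C × B^{−1} is alternal; (iii) the composition C ∘ E of two alternal moulds is alternal. -/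
namespace Moulds

section Helpers

variable {X : Type*} {K : Type*} [CommRing K]

lemma sh_nil_left (f : List X → K) (v : List X) : shuffleSum f [] v = f v := by
  simp [shuffleSum, shuffles]

lemma sh_nil_right (f : List X → K) (u : List X) : shuffleSum f u [] = f u := by
  cases u <;> simp [shuffleSum, shuffles]

lemma sh_cons (f : List X → K) (a b : X) (u v : List X) :
    shuffleSum f (a :: u) (b :: v) =
      shuffleSum (fun w => f (a :: w)) u (b :: v) +
      shuffleSum (fun w => f (b :: w)) (a :: u) v := by
  simp [shuffleSum, shuffles]

lemma sh_add (f g : List X → K) (u v : List X) :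
    shuffleSum (fun w => f w + g w) u v = shuffleSum f u v + shuffleSum g u v := by
  simp [shuffleSum]

lemma sh_mul (c : K) (f : List X → K) (u v : List X) :
    shuffleSum (fun w => c * f w) u v = c * shuffleSum f u v := by
  simp [shuffleSum, Multiset.sum_map_mul_left]

lemma sh_mul_right (c : K) (f : List X → K) (u v : List X) :
    shuffleSum (fun w => f w * c) u v = shuffleSum f u v * c := by
  simp [shuffleSum, Multiset.sum_map_mul_right]

lemma shuffles_perm (u v : List X) : ∀ w ∈ shuffles u v, w.Perm (u ++ v) := by
  induction u, v using shuffles.induct with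
  | case1 v => intro w hw; simp [shuffles] at hw; simp [hw]
  | case2 a u => intro w hw; simp [shuffles] at hw; simp [hw]
  | case3 a u b v ih1 ih2 =>
    intro w hw
    simp only [shuffles, Multiset.mem_add, Multiset.mem_map] at hw
    rcases hw with ⟨x, hx, rfl⟩ | ⟨x, hx, rfl⟩
    · exact (ih1 x hx).cons a
    · exact ((ih2 x hx).cons b).trans List.perm_middle.symm

lemma sh_congr {f g : List X → K} {u v : List X}
    (h : ∀ w, w.Perm (u ++ v) → f w = g w) : shuffleSum f u v = shuffleSum g u v := by
  unfold shuffleSum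
  rw [Multiset.map_congr rfl (fun w hw => h w (shuffles_perm u v w hw))]

/-- Sum of a function of two words over deconcatenations. -/
def dsum (F : List X → List X → K) (w : List X) : K :=
  ∑ i ∈ Finset.range (w.length + 1), F (w.take i) (w.drop i)

lemma dsum_nil (F : List X → List X → K) : dsum F [] = F [] [] := by simp [dsum]

lemma dsum_cons (F : List X → List X → K) (a : X) (w : List X) :
    dsum F (a :: w) = F [] (a :: w) + dsum (fun x y => F (a :: x) y) w := by
  rw [dsum, List.length_cons, Finset.sum_range_succ', add_comm]
  simp [dsum]

lemma dsum_add (F G : List X → List X → K) (w : List X) :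
    dsum (fun x y => F x y + G x y) w = dsum F w + dsum G w := by
  simp [dsum, Finset.sum_add_distrib]

lemma mmul_eq (M N : List X → K) : mmul M N = dsum (fun x y => M x * N y) := rfl

/-- Double deconcatenation sum. -/
def dsum2 (F : List X → List X → List X → List X → K) (u v : List X) : K :=
  dsum (fun u1 u2 => dsum (fun v1 v2 => F u1 v1 u2 v2) v) u

lemma sh_dsum_aux (n : ℕ) : ∀ (u v : List X), u.length + v.length = n →
    ∀ (F : List X → List X → K),
    shuffleSum (dsum F) u v =
      dsum2 (fun u1 v1 u2 v2 => shuffleSum (fun w => shuffleSum (F w) u2 v2) u1 v1) u v := by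
  induction n with
  | zero =>
    intro u v h F
    obtain ⟨rfl, rfl⟩ : u = [] ∧ v = [] := by
      constructor <;> apply List.eq_nil_of_length_eq_zero <;> omega
    simp [dsum2, dsum_nil, sh_nil_left]
  | succ n ih =>
    intro u v h F
    cases u with
    | nil => simp [dsum2, dsum_nil, sh_nil_left]
    | cons a u =>
      cases v with
      | nil => simp [dsum2, dsum_nil, sh_nil_right]
      | cons b v =>
        have h1 : u.length + (b :: v).length = n := by simp at h ⊢; omega
        have h2 : (a :: u).length + v.length = n := by simp at h ⊢; omega
        rw [sh_cons]
        simp only [dsum_cons F]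
        rw [sh_add, sh_add, ih _ _ h1, ih _ _ h2]
        simp only [dsum2, dsum_cons, sh_cons, sh_nil_left, sh_nil_right, dsum_add]
        ring

lemma sh_dsum (F : List X → List X → K) (u v : List X) :
    shuffleSum (dsum F) u v =
      dsum2 (fun u1 v1 u2 v2 => shuffleSum (fun w => shuffleSum (F w) u2 v2) u1 v1) u v :=
  sh_dsum_aux _ u v rfl F

/-- Product of moulds of two words. -/
def mmul2 (P Q : List X → List X → K) (u v : List X) : K :=
  dsum2 (fun u1 v1 u2 v2 => P u1 v1 * Q u2 v2) u v

/-- Tensor product. -/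
def tens (P Q : List X → K) (u v : List X) : K := P u * Q v

lemma sh_mmul (M N : List X → K) :
    shuffleSum (mmul M N) = mmul2 (shuffleSum M) (shuffleSum N) := by
  funext u v
  rw [mmul_eq, sh_dsum]
  simp only [sh_mul, sh_mul_right, mmul2]

lemma mmul2_tens (P P' Q Q' : List X → K) :
    mmul2 (tens P P') (tens Q Q') = tens (mmul P Q) (mmul P' Q') := by
  funext u v
  simp only [mmul2, dsum2, tens, mmul, dsum, Finset.sum_mul_sum]
  refine Finset.sum_congr rfl fun i _ => Finset.sum_congr rfl fun j _ => ?_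
  ring

lemma mmul2_add_right (P Q R : List X → List X → K) :
    mmul2 P (Q + R) = mmul2 P Q + mmul2 P R := by
  funext u v
  simp only [mmul2, dsum2, Pi.add_apply, mul_add, dsum_add]

lemma mmul2_add_left (P Q R : List X → List X → K) :
    mmul2 (P + Q) R = mmul2 P R + mmul2 Q R := by
  funext u v
  simp only [mmul2, dsum2, Pi.add_apply, add_mul, dsum_add]

lemma mone_nil : (mone : List X → K) [] = 1 := rfl
lemma mone_cons (a : X) (u : List X) : (mone : List X → K) (a :: u) = 0 := rfl

lemma sh_mone : shuffleSum (mone : List X → K) = tens mone mone := by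
  funext u v
  cases u with
  | nil => simp [tens, mone_nil, sh_nil_left]
  | cons a u =>
    cases v with
    | nil => simp [tens, mone_nil, sh_nil_right]
    | cons b v =>
      rw [sh_cons]
      simp [mone_cons, tens, shuffleSum]

lemma dsum_zero (w : List X) : dsum (fun _ _ => (0 : K)) w = 0 := by simp [dsum]

lemma mmul_mone_s13 (M : List X → K) : mmul M mone = M := by
  funext w
  rw [mmul_eq]
  induction w generalizing M with
  | nil => simp [dsum_nil, mone_nil]
  | cons a w ih => rw [dsum_cons, ih (fun w => M (a :: w))]; simp [mone_cons]

lemma mone_mmul_s13 (M : List X → K) : mmul mone M = M := by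
  funext w
  rw [mmul_eq]
  cases w with
  | nil => simp [dsum_nil, mone_nil]
  | cons a w => rw [dsum_cons]; simp [mone_cons, mone_nil, dsum_zero]

lemma mmul2_cancel (P Q R : List X → List X → K) (hP : P [] [] = 1)
    (h : mmul2 P Q = mmul2 P R) : Q = R := by
  have key : ∀ n, ∀ u v : List X, u.length + v.length = n → Q u v = R u v := by
    intro n
    induction n using Nat.strong_induction_on with
    | _ n ih =>
      intro u v huv
      have h0 := congrFun (congrFun h u) v
      simp only [mmul2, dsum2, dsum] at h0
      have hs : ∀ g : ℕ × ℕ → K,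
          ∑ x ∈ Finset.range (u.length + 1) ×ˢ Finset.range (v.length + 1), g x = g (0, 0) +
          ∑ x ∈ (Finset.range (u.length + 1) ×ˢ Finset.range (v.length + 1)).erase (0, 0), g x :=
        fun g => (Finset.add_sum_erase _ _ (by simp)).symm
      rw [← Finset.sum_product', ← Finset.sum_product',
        hs, hs] at h0
      rw [Finset.sum_congr rfl (g := fun x : ℕ × ℕ =>
        P (List.take x.1 u) (List.take x.2 v) * R (List.drop x.1 u) (List.drop x.2 v))] at h0
      · simpa [hP] using add_right_cancel h0
      · rintro ⟨i, j⟩ hij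
        simp only [Finset.mem_erase, Finset.mem_product, Finset.mem_range, ne_eq,
          Prod.mk.injEq] at hij
        dsimp only
        rw [ih ((u.drop i).length + (v.drop j).length) (by simp; omega) _ _ rfl]
  funext u v
  exact key _ u v rfl

lemma symetral_iff (M : List X → K) :
    Symetral M ↔ M [] = 1 ∧ shuffleSum M = tens M M := by
  unfold Symetral
  refine and_congr_right fun _ => ⟨fun h => ?_, fun h u v => ?_⟩
  · funext u v; exact h u v
  · rw [h]; rfl

lemma alternal_iff (M : List X → K) :
    Alternal M ↔ shuffleSum M = tens M mone + tens mone M := by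
  constructor
  · rintro ⟨h0, h⟩
    funext u v
    cases u with
    | nil => cases v <;> simp [sh_nil_left, tens, mone_nil, mone_cons, h0]
    | cons a u =>
      cases v with
      | nil => simp [sh_nil_right, tens, mone_nil, mone_cons]
      | cons b v => rw [h _ _ (by simp) (by simp)]; simp [tens, mone_cons]
  · intro h
    constructor
    · have := congrFun (congrFun h []) []
      simpa [sh_nil_left, tens, mone_nil] using this
    · intro u v hu hv
      rw [h]
      cases u with
      | nil => exact absurd rfl hu
      | cons a u =>
        cases v with
        | nil => exact absurd rfl hv
        | cons b v => simp [tens, mone_cons]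

lemma symetral_mmul_s13 (A B : List X → K) (hA : Symetral A) (hB : Symetral B) :
    Symetral (mmul A B) := by
  rw [symetral_iff] at *
  refine ⟨by simp [mmul_eq, dsum_nil, hA.1, hB.1], ?_⟩
  rw [sh_mmul, hA.2, hB.2, mmul2_tens]

lemma symetral_inv (B G : List X → K) (hB : Symetral B) (h : mmul B G = mone) :
    Symetral G := by
  rw [symetral_iff] at *
  have h0 := congrFun h []
  refine ⟨by simpa [mmul_eq, dsum_nil, hB.1, mone_nil] using h0, ?_⟩
  apply mmul2_cancel (tens B B) _ _ (by simp [tens, hB.1])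
  rw [mmul2_tens, ← hB.2, ← sh_mmul, h, sh_mone]

lemma alternal_conj (B G C : List X → K) (hB : Symetral B) (h : mmul B G = mone)
    (hC : Alternal C) : Alternal (mmul (mmul B C) G) := by
  have hG := symetral_inv B G hB h
  rw [symetral_iff] at *
  rw [alternal_iff] at *
  rw [sh_mmul, sh_mmul, hB.2, hC, hG.2, mmul2_add_right, mmul2_add_left]
  simp only [mmul2_tens, mmul_mone_s13, h]

/-! Composition -/

lemma splits_sum_s13 (a : X) (t : List X) (g : List (X × List X) → K) :
    ((splits (a :: t)).map g).sum =
      dsum (fun x y => ((splits y).map (fun p => g ((a, x) :: p))).sum) t := by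
  induction t generalizing a g with
  | nil => simp [splits, dsum_nil]
  | cons b t ih =>
    have e : ∀ s : List (List (X × List X)), ((s.flatMap fun p =>
        match p with
        | [] => [[(a, ([] : List X))]]
        | (b, r) :: ps => [(a, b :: r) :: ps, (a, ([] : List X)) :: (b, r) :: ps]).map g).sum
        = (s.map fun p => (match p with
          | [] => g [(a, ([] : List X))]
          | (b, r) :: ps => g ((a, b :: r) :: ps) + g ((a, ([] : List X)) :: (b, r) :: ps))).sum := by
      intro s
      induction s with
      | nil => simp
      | cons p s ihs =>
        rw [List.flatMap_cons, List.map_append, List.sum_append, ihs, List.map_cons, List.sum_cons]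
        congr 1
        rcases p with _ | ⟨⟨_, _⟩, _⟩ <;> simp
    rw [splits, e, ih, dsum_cons, ih]
    simp only [List.sum_map_add, dsum_add]
    ring

section Comp
variable [Add X]

lemma mcomp_nil_s13 (C E : List X → K) : mcomp C E [] = C [] := by simp [mcomp, splits]

lemma mcomp_cons_s13 (C E : List X → K) (a : X) (t : List X) :
    mcomp C E (a :: t) = dsum (fun x y =>
      E (a :: x) * mcomp (fun w => C (blockSum (a, x) :: w)) E y) t := by
  simp only [mcomp]
  rw [splits_sum_s13]
  congr 1
  funext x y
  rw [← List.sum_map_mul_left]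
  congr 1
  apply List.map_congr_left
  intro p _
  simp only [List.map_cons, List.prod_cons]
  ring

lemma mcomp_add (C D E : List X → K) (w : List X) :
    mcomp (fun x => C x + D x) E w = mcomp C E w + mcomp D E w := by
  simp only [mcomp, add_mul, List.sum_map_add]

lemma mcomp_mul (c : K) (C E : List X → K) (w : List X) :
    mcomp (fun x => c * C x) E w = c * mcomp C E w := by
  simp only [mcomp, mul_assoc, List.sum_map_mul_left]

lemma mcomp_zero (E : List X → K) (w : List X) :
    mcomp (fun _ => 0) E w = 0 := by
  simp [mcomp]

lemma mcomp_sum {ι : Type*} (s : Finset ι) (C : ι → List X → K) (E : List X → K) (w : List X) :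
    mcomp (fun x => ∑ i ∈ s, C i x) E w = ∑ i ∈ s, mcomp (C i) E w := by
  classical
  induction s using Finset.induction_on with
  | empty => simp [mcomp_zero]
  | insert i s hi ih => simp only [Finset.sum_insert hi, mcomp_add, ih]

/-- The double composition sum. -/
def tcomp (C E : List X → K) (u v : List X) : K :=
  mcomp (fun x => mcomp (fun y => shuffleSum C x y) E v) E u

lemma tcomp_cons (C E : List X → K) (a b : X) (u v : List X) :
    tcomp C E (a :: u) (b :: v) =
      dsum (fun x y => E (a :: x) * tcomp (fun w => C (blockSum (a, x) :: w)) E y (b :: v)) u +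
      dsum (fun x y => E (b :: x) * tcomp (fun w => C (blockSum (b, x) :: w)) E (a :: u) y) v := by
  simp only [tcomp, mcomp_cons_s13, sh_cons, mcomp_add, mul_add, dsum_add]
  congr 1
  simp only [dsum, mcomp_sum, mcomp_mul, Finset.mul_sum]
  rw [Finset.sum_comm]
  refine Finset.sum_congr rfl fun i _ => Finset.sum_congr rfl fun j _ => ?_
  ring

/-- Summand for the first-block recursion. -/
def compF (C E : List X → K) : List X → List X → K
  | [], y => C [] * mone y
  | a :: x, y => E (a :: x) * mcomp (fun w => C (blockSum (a, x) :: w)) E y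

lemma compF_nil (C E : List X → K) : compF C E [] = fun y => C [] * mone y := rfl

lemma compF_cons (C E : List X → K) (a : X) (x : List X) : compF C E (a :: x) =
    fun y => E (a :: x) * mcomp (fun w => C (blockSum (a, x) :: w)) E y := rfl

lemma mcomp_eq_dsum (C E : List X → K) : mcomp C E = dsum (compF C E) := by
  funext w
  cases w with
  | nil => simp [mcomp_nil_s13, dsum_nil, compF, mone_nil]
  | cons a t => simp [mcomp_cons_s13, dsum_cons, compF, mone_cons]

end Comp

section Comp2
variable [AddCommSemigroup X]

lemma blockSum_coe (b : X × List X) :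
    ((blockSum b : X) : WithZero X) = ((b.1 :: b.2).map (fun x : X => (x : WithZero X))).sum := by
  obtain ⟨a, t⟩ := b
  induction t generalizing a with
  | nil => simp [blockSum]
  | cons c t ih =>
    have := ih (a + c)
    simp only [blockSum, List.foldl_cons, List.map_cons, List.sum_cons] at this ⊢
    rw [this, WithZero.coe_add, add_assoc]

lemma blockSum_perm {a b : X} {s t : List X} (h : (a :: s).Perm (b :: t)) :
    blockSum (a, s) = blockSum (b, t) := by
  apply WithZero.coe_injective
  rw [blockSum_coe, blockSum_coe]
  exact (h.map _).sum_eq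

lemma sh_compF (C E : List X → K) (hE : Alternal E) (a b : X) (x y u v : List X) :
    shuffleSum (fun w => shuffleSum (compF C E w) u v) (a :: x) (b :: y) = 0 := by
  have h := hE.2 (a :: x) (b :: y) (by simp) (by simp)
  rw [sh_congr (g := fun w => E w *
    shuffleSum (mcomp (fun w => C (blockSum (a, x ++ b :: y) :: w)) E) u v), sh_mul_right, h,
    zero_mul]
  intro w hw
  cases w with
  | nil => simp at hw
  | cons c w =>
    simp only [compF_cons, sh_mul]
    rw [blockSum_perm hw]
    rfl

lemma sh_mcomp_aux (E : List X → K) (hE : Alternal E) (n : ℕ) :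
    ∀ (u v : List X), u.length + v.length = n → ∀ C : List X → K,
    shuffleSum (mcomp C E) u v = tcomp C E u v := by
  induction n using Nat.strong_induction_on with
  | _ n ih =>
    intro u v huv C
    cases u with
    | nil => simp [tcomp, mcomp_nil_s13, sh_nil_left]
    | cons a u =>
      cases v with
      | nil => simp [tcomp, mcomp_nil_s13, sh_nil_right]
      | cons b v =>
        rw [mcomp_eq_dsum, sh_dsum, tcomp_cons]
        simp only [dsum2, dsum_cons, sh_nil_left, sh_nil_right, sh_compF C E hE, dsum_zero,
          dsum_add]
        simp only [compF_nil, compF_cons, sh_mul, sh_mone, tens, mone_cons]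
        simp only [mul_zero, zero_add, add_zero]
        rw [add_comm]
        simp only [List.length_cons] at huv
        congr 1
        · refine Finset.sum_congr rfl fun i _ => ?_
          dsimp only
          rw [ih _ _ _ _ rfl]
          simp; omega
        · refine Finset.sum_congr rfl fun i _ => ?_
          dsimp only
          rw [ih _ _ _ _ rfl]
          simp; omega

lemma alternal_mcomp (C E : List X → K) (hC : Alternal C) (hE : Alternal E) :
    Alternal (mcomp C E) := by
  refine ⟨by rw [mcomp_nil_s13, hC.1], fun u v hu hv => ?_⟩
  rw [sh_mcomp_aux E hE _ u v rfl]
  cases u with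
  | nil => exact absurd rfl hu
  | cons a u =>
    cases v with
    | nil => exact absurd rfl hv
    | cons b v =>
      simp only [tcomp, mcomp_cons_s13]
      simp only [hC.2 (_ :: _) (_ :: _) (by simp) (by simp), mcomp_zero, mul_zero, dsum_zero]

end Comp2

end Helpers

/- STATEMENT 13: Over a field K of characteristic zero and a commutative semigroup Ω:
(i) the product of two symétral moulds is symétral and the multiplicative inverse of
a symétral mould is symétral; (ii) if B is symétral and C alternal then
B × C × B⁻¹ is alternal; (iii) the composition of two alternal moulds is alternal. -/

variable {Ω : Type*} [AddCommSemigroup Ω] {K : Type*} [Field K] [CharZero K]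

theorem mould_symmetry_stability :
    (∀ A B : List Ω → K, Symetral A → Symetral B → Symetral (mmul A B)) ∧
    (∀ B Binv : List Ω → K, Symetral B →
        mmul B Binv = mone → mmul Binv B = mone → Symetral Binv) ∧
    (∀ B Binv C : List Ω → K, Symetral B →
        mmul B Binv = mone → mmul Binv B = mone → Alternal C →
        Alternal (mmul (mmul B C) Binv)) ∧
    (∀ C E : List Ω → K, Alternal C → Alternal E → Alternal (mcomp C E)) :=
  ⟨symetral_mmul_s13, fun B G hB h _ => symetral_inv B G hB h,
    fun B G C hB h _ hC => alternal_conj B G C hB h hC, alternal_mcomp⟩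

end Moulds
end

section
/- Let K be a field, Ω a commutative semigroup, and g : Ω → K a semigroup homomorphism into (K, ·), i.e., g(α+β) = g(α)g(β); set f(∅) = 1 and f(w) = g(ω_1)⋯g(ω_r) for w = (ω_1,…,ω_r), and assume f(w) ≠ 1 for every nonempty word w. If a mould M on Ω satisfies M^∅ = 1 and f(w) · M^w = M^w + M^{(ω_2,…,ω_r)} for every nonempty word w = (ω_1,…,ω_r) (equivalently, A_f(M) = (1^• + I^•) × M, where (A_f M)^w = f(w) M^w), then M is symétrel. -/
namespace Moulds

/- STATEMENT 18: Over a field K and a commutative semigroup Ω, let g : Ω → K be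
multiplicative (g(α+β) = g(α)g(β)), f(w) = g(ω₁)⋯g(ω_r) (f(∅) = 1), and suppose
f(w) ≠ 1 for every nonempty word w.  If M^∅ = 1 and
f(w)·M^w = M^w + M^{(ω₂,…,ω_r)} for every nonempty word w (i.e.
A_f(M) = (1^• + I^•) × M), then M is symétrel. -/

variable {Ω : Type*} [AddCommSemigroup Ω] {K : Type*} [Field K]

theorem cshuffles_prod_aux (g : Ω → K) (hg : ∀ a b : Ω, g (a + b) = g a * g b)
    (u v : List Ω) :
    ∀ w ∈ cshuffles u v, (w.map g).prod = (u.map g).prod * (v.map g).prod := by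
  fun_induction cshuffles u v with
  | case1 v => simp
  | case2 a u => simp
  | case3 a u b v ih1 ih2 ih3 =>
    intro w hw
    simp only [Multiset.mem_add, Multiset.mem_map] at hw
    rcases hw with (⟨w, hw, rfl⟩ | ⟨w, hw, rfl⟩) | ⟨w, hw, rfl⟩
    · have := ih1 w hw
      simp only [List.map_cons, List.prod_cons] at this ⊢
      rw [this]; ring
    · have := ih2 w hw
      simp only [List.map_cons, List.prod_cons] at this ⊢
      rw [this]; ring
    · have := ih3 w hw
      simp only [List.map_cons, List.prod_cons] at this ⊢
      rw [this, hg]; ring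

theorem cons_sum_aux (g : Ω → K) (M : List Ω → K)
    (heq : ∀ w : List Ω, w ≠ [] → (w.map g).prod * M w = M w + M w.tail)
    (a : Ω) (c : K) (S : Multiset (List Ω)) :
    (∀ w ∈ S, (w.map g).prod = c) →
      (g a * c - 1) * (S.map (fun w => M (a :: w))).sum = (S.map M).sum := by
  induction S using Multiset.induction_on with
  | empty => simp
  | cons w S ih =>
    intro h
    have h1 := ih (fun w' hw' => h w' (Multiset.mem_cons_of_mem hw'))
    have h2 := h w (Multiset.mem_cons_self w S)
    have h3 := heq (a :: w) (by simp)
    simp only [List.map_cons, List.prod_cons, List.tail_cons, h2] at h3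
    simp only [Multiset.map_cons, Multiset.sum_cons]
    linear_combination h1 + h3

theorem cshuffleSum_aux (g : Ω → K) (hg : ∀ a b : Ω, g (a + b) = g a * g b)
    (hne : ∀ w : List Ω, w ≠ [] → (w.map g).prod ≠ 1)
    (M : List Ω → K) (hM0 : M [] = 1)
    (heq : ∀ w : List Ω, w ≠ [] → (w.map g).prod * M w = M w + M w.tail)
    (u v : List Ω) : ((cshuffles u v).map M).sum = M u * M v := by
  fun_induction cshuffles u v with
  | case1 v => simp [hM0]
  | case2 a u => simp [hM0]
  | case3 a u b v ih1 ih2 ih3 =>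
    have e1 := cons_sum_aux g M heq a _ _ (cshuffles_prod_aux g hg u (b :: v))
    have e2 := cons_sum_aux g M heq b _ _ (cshuffles_prod_aux g hg (a :: u) v)
    have e3 := cons_sum_aux g M heq (a + b) _ _ (cshuffles_prod_aux g hg u v)
    have ha := heq (a :: u) (by simp)
    have hb := heq (b :: v) (by simp)
    have hn := hne ((a :: u) ++ (b :: v)) (by simp)
    rw [ih1] at e1
    rw [ih2] at e2
    rw [ih3, hg] at e3
    simp only [List.map_append, List.prod_append, List.map_cons, List.prod_cons,
      List.tail_cons] at e1 e2 e3 ha hb hn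
    simp only [Multiset.map_add, Multiset.sum_add, Multiset.map_map, Function.comp_def]
    apply mul_left_cancel₀ (sub_ne_zero.mpr hn)
    linear_combination e1 + e2 + e3 - (g b * (v.map g).prod * M (b :: v)) * ha
      - (M (a :: u) + M u) * hb

theorem symetrel_of_automorphism_equation
    (g : Ω → K) (hg : ∀ a b : Ω, g (a + b) = g a * g b)
    (hne : ∀ w : List Ω, w ≠ [] → (w.map g).prod ≠ 1)
    (M : List Ω → K) (hM0 : M [] = 1)
    (heq : ∀ w : List Ω, w ≠ [] → (w.map g).prod * M w = M w + M w.tail) :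
    Symetrel M := by
  exact ⟨hM0, fun u v => cshuffleSum_aux g hg hne M hM0 heq u v⟩

end Moulds
end
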